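/- arXiv:2102.08508 — 2 statements merged into one kernel-verified Lean document; each statement's English description precedes it below -/
import Mathlib

section
/- For every integer n ≥ 1, the number of ballot permutations of [n] equals ((n−1)!!)² if n is even, and equals n!!·(n−2)!! if n is odd, where m!! denotes the double factorial m(m−2)(m−4)⋯ (ending at 1 or 2) with the conventions 0!! = (−1)!! = 1. -/
/-- The word `π₁π₂⋯πₙ` of a permutation of `[n] = {1, …, n}`, as a function on
0-indexed positions; `permWord n π i` is the letter at (1-indexed) position `i+1`,
a value in `{1, …, n}` (and `0` for out-of-range positions). -/
def permWord (n : ℕ) (π : Equiv.Perm (Fin n)) : ℕ → ℕ :=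
  fun i => if h : i < n then (π ⟨i, h⟩ : ℕ) + 1 else 0

/-- A permutation of `[n]` is a ballot permutation if every prefix `π₁⋯πᵢ`, `1 ≤ i ≤ n`,
has at least as many ascents as descents. -/
def IsBallot (n : ℕ) (π : Equiv.Perm (Fin n)) : Prop :=
  ∀ i ≤ n,
    ((Finset.range (i - 1)).filter (fun k => permWord n π (k + 1) < permWord n π k)).card ≤
      ((Finset.range (i - 1)).filter (fun k => permWord n π k < permWord n π (k + 1))).card

theorem two_splits (n : ℕ) (hn : 1 ≤ n) (h : ℕ → ℤ)
    (hs : ∀ i, i + 1 < n → h (i+1) = h i + 1 ∨ h (i+1) = h i - 1) :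
    ((Finset.range (n+1)).filter (fun k => (∀ i < k, h (k-1) ≤ h i) ∧
      (∀ i, k ≤ i → i < n → h k ≤ h i))).card = 2 := by
  classical
  obtain ⟨m, hm, hmin⟩ := Finset.exists_min_image (Finset.range n) h ⟨0, by simp; omega⟩
  simp only [Finset.mem_range] at hm hmin
  have hne : ((Finset.range n).filter (fun i => h i = h m)).Nonempty :=
    ⟨m, by simp [hm]⟩
  set T := (Finset.range n).filter (fun i => h i = h m) with hT
  obtain ⟨p, hp, hpm⟩ : ∃ p ∈ T, ∀ x ∈ T, p ≤ x :=
    ⟨T.min' hne, T.min'_mem hne, fun x hx => T.min'_le x hx⟩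
  obtain ⟨q, hq, hqm⟩ : ∃ q ∈ T, ∀ x ∈ T, x ≤ q :=
    ⟨T.max' hne, T.max'_mem hne, fun x hx => T.le_max' x hx⟩
  have hpq : p ≤ q := hpm q hq
  simp only [hT, Finset.mem_filter, Finset.mem_range] at hp hq hpm hqm
  have : (Finset.range (n+1)).filter (fun k => (∀ i < k, h (k-1) ≤ h i) ∧
      (∀ i, k ≤ i → i < n → h k ≤ h i)) = {p, q+1} := by
    ext k
    simp only [Finset.mem_filter, Finset.mem_range, Finset.mem_insert, Finset.mem_singleton]
    constructor
    · rintro ⟨hk, hL, hR⟩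
      rcases Nat.eq_zero_or_pos k with rfl | hk0
      · left
        have h1 := hR m (by omega) hm
        have h2 := hmin 0 (by omega)
        have := hpm 0 ⟨by omega, by omega⟩
        omega
      rcases Nat.lt_or_ge k n with hkn | hkn
      · obtain ⟨j, rfl⟩ : ∃ j, k = j + 1 := ⟨k-1, by omega⟩
        simp only [Nat.add_sub_cancel] at hL
        rcases hs j hkn with hj | hj
        · right
          have hjm : h j = h m := by
            have h2 := hmin j (by omega)
            rcases Nat.lt_or_ge m (j+1) with h3 | h3
            · have := hL m h3; omega
            · have := hR m h3 hm; omega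
          have h4 := hqm j ⟨by omega, hjm⟩
          by_contra hne
          have := hR q (by omega) hq.1
          omega
        · left
          have hjm : h (j+1) = h m := by
            have h2 := hmin (j+1) (by omega)
            rcases Nat.lt_or_ge m (j+1) with h3 | h3
            · have := hL m h3; omega
            · have := hR m h3 hm; omega
          have h4 := hpm (j+1) ⟨by omega, hjm⟩
          by_contra hne
          have := hL p (by omega)
          omega
      · right
        have : k = n := by omega
        subst this
        have h1 := hL m hm
        have h2 := hmin (k-1) (by omega)
        have := hqm (k-1) ⟨by omega, by omega⟩
        omega
    · rintro (hkp | rfl)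
      · rw [hkp]
        refine ⟨by omega, ?_, ?_⟩
        · intro i hi
          have h1 : h i ≠ h m := fun e => by
            have := hpm i ⟨by omega, e⟩; omega
          have h2 := hmin i (by omega)
          have h3 := hs (p-1) (by omega)
          rw [Nat.sub_add_cancel (by omega)] at h3
          have h4 := hmin (p-1) (by omega)
          omega
        · intro i _ hi
          have := hmin i hi
          omega
      · refine ⟨by omega, ?_, ?_⟩
        · intro i hi
          have := hmin i (by omega)
          simp only [Nat.add_sub_cancel]
          omega
        · intro i hi hin
          have h1 : h i ≠ h m := fun e => by
            have := hqm i ⟨by omega, e⟩; omega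
          have h2 := hmin i (by omega)
          have h3 := hs q (by omega)
          have h4 := hmin (q+1) (by omega)
          omega
  rw [this, Finset.card_pair (by omega)]

def htw (w : ℕ → ℕ) (i : ℕ) : ℤ :=
  ∑ j ∈ Finset.range i, (if w j < w (j+1) then 1 else if w (j+1) < w j then -1 else 0)

def lw (l : List ℕ) (i : ℕ) : ℕ := l.getD i 0

def LBal (l : List ℕ) : Prop := ∀ i < l.length, 0 ≤ htw (lw l) i

theorem htw_congr {w w' : ℕ → ℕ} (i : ℕ)
    (h : ∀ j < i, (w j < w (j+1) ↔ w' j < w' (j+1)) ∧ (w (j+1) < w j ↔ w' (j+1) < w' j)) :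
    htw w i = htw w' i := by
  unfold htw
  refine Finset.sum_congr rfl fun j hj => ?_
  have := h j (Finset.mem_range.1 hj)
  simp only [this.1, this.2]

theorem htw_shift (w : ℕ → ℕ) (k i : ℕ) : htw (fun j => w (k + j)) i = htw w (k+i) - htw w k := by
  unfold htw
  rw [Finset.sum_range_add]
  simp [add_assoc]

theorem htw_succ (w : ℕ → ℕ) (i : ℕ) : htw w (i+1) = htw w i +
   (if w i < w (i+1) then 1 else if w (i+1) < w i then -1 else 0) := by
  unfold htw
  rw [Finset.sum_range_succ]

theorem htw_rev (w : ℕ → ℕ) (k i : ℕ) (hi : i ≤ k) :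
    htw (fun j => w (k - j)) i = htw w (k-i) - htw w k := by
  induction i with
  | zero => simp [htw]
  | succ i ih =>
    rw [htw_succ, ih (by omega)]
    obtain ⟨d, rfl⟩ : ∃ d, k = i + 1 + d := ⟨k - (i+1), by omega⟩
    have e1 : i + 1 + d - i = d + 1 := by omega
    have e2 : i + 1 + d - (i+1) = d := by omega
    simp only [e1, e2]
    rw [htw_succ w d]
    split_ifs <;> omega

theorem lbal_drop (l : List ℕ) (k : ℕ) : LBal (l.drop k) ↔
    ∀ i, k ≤ i → i < l.length → htw (lw l) k ≤ htw (lw l) i := by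
  have e : lw (l.drop k) = fun j => lw l (k + j) := by
    funext j
    simp [lw, List.getD_eq_getElem?_getD, List.getElem?_drop]
  unfold LBal
  simp only [e, htw_shift, List.length_drop]
  constructor
  · intro h i hk hi
    have := h (i-k) (by omega)
    rw [Nat.add_sub_cancel' hk] at this
    omega
  · intro h i hi
    have := h (k+i) (by omega) (by omega)
    omega

theorem lbal_take (l : List ℕ) (k : ℕ) (hk : k ≤ l.length) : LBal (l.take k).reverse ↔
    ∀ i < k, htw (lw l) (k-1) ≤ htw (lw l) i := by
  have e : ∀ j < k, lw (l.take k).reverse j = lw l (k - 1 - j) := by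
    intro j hj
    simp only [lw, List.getD_eq_getElem?_getD]
    rw [List.getElem?_reverse (by simp; omega), List.getElem?_take_of_lt (by simp; omega)]
    simp [hk]
  have e2 : ∀ i < k, htw (lw (l.take k).reverse) i = htw (lw l) (k-1-i) - htw (lw l) (k-1) := by
    intro i hi
    rw [← htw_rev _ _ _ (by omega)]
    apply htw_congr
    intro j hj
    rw [e j (by omega), e (j+1) (by omega)]
    exact ⟨Iff.rfl, Iff.rfl⟩
  unfold LBal
  simp only [List.length_reverse, List.length_take, Nat.min_eq_left hk]
  constructor
  · intro h i hi
    have := h (k-1-i) (by omega)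
    rw [e2 _ (by omega), show k-1-(k-1-i) = i by omega] at this
    omega
  · intro h i hi
    rw [e2 _ hi]
    have := h (k-1-i) (by omega)
    omega

noncomputable def PL (S : Finset ℕ) : Finset (List ℕ) := S.toList.permutations.toFinset

theorem mem_PL {S : Finset ℕ} {l : List ℕ} : l ∈ PL S ↔ l.Nodup ∧ l.toFinset = S := by
  unfold PL
  rw [List.mem_toFinset, List.mem_permutations]
  constructor
  · intro h
    refine ⟨h.nodup_iff.2 S.nodup_toList, ?_⟩
    rw [List.toFinset_eq_of_perm _ _ h, Finset.toList_toFinset]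
  · rintro ⟨h1, rfl⟩
    rw [List.perm_ext_iff_of_nodup h1 (Finset.nodup_toList _)]
    simp

theorem PL_length {S : Finset ℕ} {l : List ℕ} (h : l ∈ PL S) : l.length = S.card := by
  obtain ⟨h1, rfl⟩ := mem_PL.1 h
  exact (List.toFinset_card_of_nodup h1).symm

theorem card_PL (S : Finset ℕ) : (PL S).card = S.card.factorial := by
  unfold PL
  rw [List.toFinset_card_of_nodup (List.nodup_permutations _ S.nodup_toList),
    List.length_permutations, Finset.length_toList]

open Classical in
noncomputable def BL (S : Finset ℕ) : Finset (List ℕ) := (PL S).filter LBal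

theorem mem_BL {S : Finset ℕ} {l : List ℕ} : l ∈ BL S ↔ l ∈ PL S ∧ LBal l := by
  classical
  unfold BL
  exact Finset.mem_filter

theorem lbal_map {S : Finset ℕ} {l : List ℕ} (hl : l ∈ PL S) {f : ℕ → ℕ}
    (hf : StrictMonoOn f S) : LBal (l.map f) ↔ LBal l := by
  unfold LBal
  rw [List.length_map]
  refine forall₂_congr fun i hi => ?_
  have e : ∀ j < l.length, lw (l.map f) j = f (lw l j) ∧ lw l j ∈ (S : Set ℕ) := by
    intro j hj
    obtain ⟨_, rfl⟩ := mem_PL.1 hl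
    simp [lw, hj]
  rw [htw_congr (w' := lw l)]
  intro j hj
  obtain ⟨a1, a2⟩ := e j (by omega)
  obtain ⟨b1, b2⟩ := e (j+1) (by omega)
  rw [a1, b1]
  exact ⟨hf.lt_iff_lt a2 b2, hf.lt_iff_lt b2 a2⟩

theorem map_mem_PL {S T : Finset ℕ} {l : List ℕ} (hl : l ∈ PL S) {f : ℕ → ℕ}
    (hf : Set.InjOn f S) (hT : S.image f = T) : l.map f ∈ PL T := by
  obtain ⟨h1, rfl⟩ := mem_PL.1 hl
  refine mem_PL.2 ⟨?_, ?_⟩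
  · refine List.Nodup.map_on ?_ h1
    intro x hx y hy
    exact hf (by simpa using hx) (by simpa using hy)
  · rw [← hT]
    ext x
    simp

theorem card_BL_congr (S T : Finset ℕ) (f g : ℕ → ℕ) (hf : StrictMonoOn f S)
    (hT : S.image f = T) (hg : ∀ x ∈ S, g (f x) = x) : (BL S).card = (BL T).card := by
  have hfg : ∀ y ∈ T, f (g y) = y := by
    intro y hy
    rw [← hT] at hy
    obtain ⟨x, hx, rfl⟩ := Finset.mem_image.1 hy
    rw [hg x hx]
  have hS : T.image g = S := by
    rw [← hT, Finset.image_image]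
    ext x
    simp only [Finset.mem_image, Function.comp]
    constructor
    · rintro ⟨y, hy, rfl⟩; rw [hg y hy]; exact hy
    · intro hx; exact ⟨x, hx, hg x hx⟩
  have hgi : Set.InjOn g T := by
    intro x hx y hy h
    rw [← hfg x hx, ← hfg y hy, h]
  have mm : ∀ l ∈ PL T, (l.map g).map f = l := by
    intro l hl
    rw [List.map_map]
    conv_rhs => rw [← List.map_id l]
    refine List.map_congr_left fun x hx => ?_
    obtain ⟨_, rfl⟩ := mem_PL.1 hl
    exact hfg x (by simpa using hx)
  refine Finset.card_bij' (fun l _ => l.map f) (fun l _ => l.map g) ?_ ?_ ?_ ?_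
  · intro l hl
    rw [mem_BL] at hl ⊢
    exact ⟨map_mem_PL hl.1 hf.injOn hT, (lbal_map hl.1 hf).2 hl.2⟩
  · intro l hl
    rw [mem_BL] at hl ⊢
    have := map_mem_PL hl.1 hgi hS
    refine ⟨this, (lbal_map this hf).1 ?_⟩
    rw [mm l hl.1]
    exact hl.2
  · intro l hl
    rw [mem_BL] at hl
    rw [List.map_map]
    conv_rhs => rw [← List.map_id l]
    refine List.map_congr_left fun x hx => ?_
    obtain ⟨_, rfl⟩ := mem_PL.1 hl.1
    exact hg x (by simpa using hx)
  · intro l hl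
    rw [mem_BL] at hl
    exact mm l hl.1

noncomputable def bn (n : ℕ) : ℕ := (BL (Finset.range n)).card

theorem card_BL (S : Finset ℕ) : (BL S).card = bn S.card := by
  have hfin : (Set.ofPred (fun x => x ∈ S)).Finite := S.finite_toSet
  have hc : hfin.toFinset = S := by ext x; simp
  have hs := Nat.nth_strictMonoOn hfin
  have hi := Nat.image_nth_Iio_card hfin
  rw [hc] at hs hi
  symm
  refine card_BL_congr _ _ (Nat.nth (· ∈ S)) (Nat.count (· ∈ S)) ?_ ?_ ?_
  · simpa using hs
  · rw [← Finset.coe_inj]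
    simpa using hi
  · intro x hx
    refine Nat.count_nth fun hf => ?_
    have : hf.toFinset = S := by ext x; simp
    rw [this]
    simpa using hx

theorem count_split (n k : ℕ) (hk : k ≤ n) :
    (open Classical in ((PL (Finset.range n)).filter
      (fun l => LBal (l.take k).reverse ∧ LBal (l.drop k))).card) =
      n.choose k * (bn k * bn (n-k)) := by
  classical
  have h : (((Finset.range n).powersetCard k).sigma
      (fun A => BL A ×ˢ BL (Finset.range n \ A))).card = n.choose k * (bn k * bn (n-k)) := by
    rw [Finset.card_sigma, Finset.sum_congr rfl (g := fun _ => bn k * bn (n-k))]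
    · simp
    · intro A hA
      rw [Finset.mem_powersetCard] at hA
      rw [Finset.card_product, card_BL, card_BL, Finset.card_sdiff_of_subset hA.1, hA.2,
        Finset.card_range]
  rw [← h]
  symm
  refine Finset.card_bij (fun x _ => x.2.1.reverse ++ x.2.2) ?_ ?_ ?_
  · rintro ⟨A, l1, l2⟩ hx
    simp only [Finset.mem_sigma, Finset.mem_powersetCard, Finset.mem_product, mem_BL] at hx
    obtain ⟨⟨hA, hAk⟩, ⟨h1, b1⟩, h2, b2⟩ := hx
    have hl := PL_length h1
    rw [mem_PL] at h1 h2
    have hlen : l1.reverse.length = k := by simp [hl, hAk]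
    rw [Finset.mem_filter, mem_PL, List.take_left' hlen, List.drop_left' hlen]
    refine ⟨⟨?_, ?_⟩, by simpa using b1, b2⟩
    · refine List.Nodup.append (List.nodup_reverse.2 h1.1) h2.1 ?_
      intro x hx hx2
      have e1 : x ∈ l1.toFinset := by simpa using hx
      have e2 : x ∈ l2.toFinset := by simpa using hx2
      rw [h1.2] at e1
      rw [h2.2] at e2
      exact (Finset.mem_sdiff.1 e2).2 e1
    · rw [List.toFinset_append, List.toFinset_reverse, h1.2, h2.2]
      exact Finset.union_sdiff_of_subset hA
  · rintro ⟨A, l1, l2⟩ hx ⟨A', l1', l2'⟩ hx' he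
    simp only [Finset.mem_sigma, Finset.mem_powersetCard, Finset.mem_product, mem_BL] at hx hx'
    obtain ⟨⟨hA, hAk⟩, ⟨h1, b1⟩, h2, b2⟩ := hx
    obtain ⟨⟨hA', hAk'⟩, ⟨h1', b1'⟩, h2', b2'⟩ := hx'
    have hl := PL_length h1
    have hl' := PL_length h1'
    obtain ⟨e1, e2⟩ := List.append_inj he (by simp [hl, hl', hAk, hAk'])
    simp only at e1 e2
    have e3 := List.reverse_injective e1
    have : A = A' := by rw [← (mem_PL.1 h1).2, ← (mem_PL.1 h1').2, e3]
    subst this e3 e2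
    rfl
  · intro l hl
    rw [Finset.mem_filter] at hl
    obtain ⟨hP, b1, b2⟩ := hl
    have hlen := PL_length hP
    rw [Finset.card_range] at hlen
    obtain ⟨hn, ht⟩ := mem_PL.1 hP
    have hn' := hn
    rw [← List.take_append_drop k l, List.nodup_append'] at hn'
    refine ⟨⟨(l.take k).toFinset, (l.take k).reverse, l.drop k⟩, ?_, ?_⟩
    · simp only [Finset.mem_sigma, Finset.mem_powersetCard, Finset.mem_product, mem_BL, mem_PL]
      refine ⟨⟨?_, ?_⟩, ⟨⟨List.nodup_reverse.2 hn'.1, by simp⟩, b1⟩, ⟨hn'.2.1, ?_⟩, b2⟩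
      · rw [← ht]
        intro x hx
        rw [List.mem_toFinset] at hx ⊢
        exact List.mem_of_mem_take hx
      · rw [List.toFinset_card_of_nodup hn'.1]; simp [hlen, hk]
      · rw [← ht]
        conv_rhs => rw [← List.take_append_drop k l]
        rw [List.toFinset_append, List.take_append_drop]
        rw [Finset.union_sdiff_cancel_left]
        rw [Finset.disjoint_left]
        intro x hx hx2
        rw [List.mem_toFinset] at hx hx2
        exact hn'.2.2 hx hx2
    · simp

theorem bn_conv (n : ℕ) (hn : 1 ≤ n) :
    ∑ k ∈ Finset.range (n+1), n.choose k * (bn k * bn (n-k)) = 2 * n.factorial := by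
  classical
  have e : ∑ k ∈ Finset.range (n+1), n.choose k * (bn k * bn (n-k)) =
      ∑ k ∈ Finset.range (n+1), ((PL (Finset.range n)).filter
      (fun l => LBal (l.take k).reverse ∧ LBal (l.drop k))).card := by
    refine Finset.sum_congr rfl fun k hk => ?_
    rw [← count_split n k (by simpa [Nat.lt_succ_iff] using hk)]
  rw [e]
  have := Finset.sum_card_bipartiteAbove_eq_sum_card_bipartiteBelow
    (s := Finset.range (n+1)) (t := PL (Finset.range n))
    (fun k l => LBal (l.take k).reverse ∧ LBal (l.drop k))
  unfold Finset.bipartiteAbove Finset.bipartiteBelow at this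
  rw [this, Finset.sum_congr rfl (g := fun _ => 2)]
  · simp [card_PL, mul_comm]
  · intro l hl
    have hlen := PL_length hl
    rw [Finset.card_range] at hlen
    rw [← two_splits n hn (htw (lw l))]
    · congr 1
      refine Finset.filter_congr fun k hk => ?_
      show LBal _ ∧ LBal _ ↔ _
      rw [lbal_take l k (by rw [hlen]; simpa [Nat.lt_succ_iff] using hk), lbal_drop, hlen]
    · intro i hi
      rw [htw_succ]
      have hne : lw l i ≠ lw l (i+1) := by
        have h1 : i < l.length := by omega
        have h2 : i + 1 < l.length := by omega
        simp only [lw, List.getD_eq_getElem?_getD, List.getElem?_eq_getElem h1,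
          List.getElem?_eq_getElem h2, Option.getD_some]
        intro h
        have := (mem_PL.1 hl).1.getElem_inj_iff.1 h
        omega
      rcases lt_or_gt_of_ne hne with h | h
      · left; simp [h]
      · right; simp [h, not_lt_of_gt h]; omega

theorem bn_zero : bn 0 = 1 := by
  have : BL (Finset.range 0) = {[]} := by
    ext l
    rw [mem_BL, mem_PL]
    constructor
    · rintro ⟨⟨_, h⟩, _⟩
      simpa using h
    · intro h
      rw [Finset.mem_singleton] at h
      subst h
      simp [LBal]
  rw [bn, this]; rfl

theorem isBallot_iff (n : ℕ) (π : Equiv.Perm (Fin n)) :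
    IsBallot n π ↔ LBal (List.ofFn (fun i => (π i : ℕ))) := by
  have key : ∀ m, htw (permWord n π) m =
      (((Finset.range m).filter (fun k => permWord n π k < permWord n π (k + 1))).card : ℤ) -
      ((Finset.range m).filter (fun k => permWord n π (k + 1) < permWord n π k)).card := by
    intro m
    rw [htw, Finset.card_filter, Finset.card_filter]
    push_cast
    rw [← Finset.sum_sub_distrib]
    refine Finset.sum_congr rfl fun j _ => ?_
    split_ifs <;> first | omega | simp
  have hw : ∀ j < n, permWord n π j = lw (List.ofFn (fun i => (π i : ℕ))) j + 1 := by
    intro j hj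
    simp [permWord, lw, hj]
  have hh : ∀ i < n, htw (lw (List.ofFn (fun i => (π i : ℕ)))) i = htw (permWord n π) i := by
    intro i hi
    apply htw_congr
    intro j hj
    rw [hw j (by omega), hw (j+1) (by omega)]
    simp
  unfold IsBallot LBal
  rw [List.length_ofFn]
  constructor
  · intro h i hi
    have := h (i+1) hi
    rw [hh i hi, key]
    simp only [Nat.add_sub_cancel] at this
    omega
  · intro h i hi
    rcases Nat.eq_zero_or_pos i with rfl | h0
    · simp
    · have := h (i-1) (by omega)
      rw [hh _ (by omega), key] at this
      omega

theorem card_ballot (n : ℕ) : Nat.card {π : Equiv.Perm (Fin n) // IsBallot n π} = bn n := by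
  classical
  rw [Nat.card_eq_fintype_card, Fintype.card_subtype, bn]
  refine Finset.card_bij (fun π _ => List.ofFn (fun i => (π i : ℕ))) ?_ ?_ ?_
  · intro π hπ
    rw [Finset.mem_filter, isBallot_iff] at hπ
    rw [mem_BL, mem_PL]
    refine ⟨⟨?_, ?_⟩, hπ.2⟩
    · rw [List.nodup_ofFn]
      exact Fin.val_injective.comp π.injective
    · ext x
      simp only [List.mem_toFinset, List.mem_ofFn, Finset.mem_range]
      constructor
      · rintro ⟨i, rfl⟩; exact (π i).2
      · intro hx; exact ⟨π.symm ⟨x, hx⟩, by simp⟩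
  · intro π _ σ _ h
    have := List.ofFn_injective h
    ext i
    exact congrFun this i
  · intro l hl
    rw [mem_BL] at hl
    have hlen := PL_length hl.1
    rw [Finset.card_range] at hlen
    obtain ⟨hnd, ht⟩ := mem_PL.1 hl.1
    have hlt : ∀ i (h : i < l.length), l[i] < n := by
      intro i h
      rw [← Finset.mem_range, ← ht]
      simp
    let f : Fin n → Fin n := fun i => ⟨l[i.1]'(by rw [hlen]; exact i.2), hlt _ _⟩
    have hf : Function.Injective f := by
      intro i j h
      have h' := congrArg Fin.val h
      simp only [f] at h'
      exact Fin.ext (hnd.getElem_inj_iff.1 h')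
    let π : Equiv.Perm (Fin n) := Equiv.ofBijective f (Finite.injective_iff_bijective.1 hf)
    have hπ : List.ofFn (fun i => (π i : ℕ)) = l := by
      apply List.ext_getElem
      · simp [hlen]
      · intro i h1 h2
        simp [π, f]
    refine ⟨π, ?_, hπ⟩
    rw [Finset.mem_filter, isBallot_iff, hπ]
    exact ⟨Finset.mem_univ _, hl.2⟩

noncomputable def egf : PowerSeries ℚ := PowerSeries.mk fun n => (bn n : ℚ) / n.factorial

theorem egf_sq : egf ^ 2 * (1 - PowerSeries.X) = 1 + PowerSeries.X := by
  have hc : ∀ n, PowerSeries.coeff n (egf ^ 2) = if n = 0 then 1 else 2 := by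
    intro n
    rw [pow_two, PowerSeries.coeff_mul, Finset.Nat.sum_antidiagonal_eq_sum_range_succ_mk]
    simp only [egf, PowerSeries.coeff_mk]
    split_ifs with h
    · subst h
      simp [bn_zero]
    · have := bn_conv n (by omega)
      have h2 : (∑ k ∈ Finset.range (n+1), (n.choose k : ℚ) * (bn k * bn (n-k)))
          = 2 * n.factorial := by exact_mod_cast this
      have h0 : (n.factorial : ℚ) ≠ 0 := by positivity
      rw [← mul_left_inj' h0, ← h2, Finset.sum_mul]
      refine Finset.sum_congr rfl fun k hk => ?_
      rw [Nat.cast_choose ℚ (by simpa [Nat.lt_succ_iff] using hk)]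
      field_simp
  ext n
  rw [mul_sub, mul_one, map_sub, map_add, hc]
  rcases n with _ | _ | n
  · simp
  · rw [PowerSeries.coeff_succ_mul_X, hc]
    simp [PowerSeries.coeff_one, PowerSeries.coeff_X]
    norm_num
  · rw [PowerSeries.coeff_succ_mul_X, hc]
    simp [PowerSeries.coeff_one, PowerSeries.coeff_X]

open PowerSeries in
theorem egf_ode : d⁄dX ℚ egf * (1 - X ^ 2) = egf := by
  have h := egf_sq
  have h' := congrArg (d⁄dX ℚ) h
  rw [Derivation.leibniz, Derivation.leibniz_pow] at h'
  simp only [map_sub, map_add, derivative_X, Derivation.map_one_eq_zero, smul_eq_mul,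
    nsmul_eq_mul] at h'
  have hne : (2 : PowerSeries ℚ) * egf ≠ 0 := by
    intro h0
    have := congrArg (PowerSeries.coeff 0) (congrArg (fun x => x * egf * (1 - X)) h0)
    rw [show 2 * egf * egf * (1 - X) = 2 * (egf ^ 2 * (1 - X)) by ring, h, show (2 : PowerSeries ℚ) = PowerSeries.C (2 : ℚ) from (map_ofNat _ 2).symm] at this
    simp at this
  apply mul_left_cancel₀ hne
  push_cast at h'
  simp only [pow_one] at h'
  linear_combination (1 + X) * h' - h

open PowerSeries in
theorem bn_rec (n : ℕ) : bn (n+2) = bn (n+1) + (n+1) * n * bn n := by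
  have h := congrArg (PowerSeries.coeff (n+1)) egf_ode
  have hX : d⁄dX ℚ egf * (1 - X ^ 2) = d⁄dX ℚ egf - d⁄dX ℚ egf * X * X := by ring
  rw [hX, map_sub, PowerSeries.coeff_succ_mul_X, coeff_derivative] at h
  have hn : PowerSeries.coeff n (d⁄dX ℚ egf * X) = n * PowerSeries.coeff n egf := by
    rcases n with _ | n
    · simp
    · rw [PowerSeries.coeff_succ_mul_X, coeff_derivative]; push_cast; ring
  rw [hn] at h
  simp only [egf, PowerSeries.coeff_mk, Nat.factorial_succ] at h
  push_cast at h
  have h0 : (n.factorial : ℚ) ≠ 0 := by positivity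
  have h1 : (n : ℚ) + 1 ≠ 0 := by positivity
  have h2 : (n : ℚ) + 1 + 1 ≠ 0 := by positivity
  field_simp at h
  have : (bn (n+2) : ℚ) = bn (n+1) + (n+1) * n * bn n := by linear_combination h
  exact_mod_cast this

theorem bn_one : bn 1 = 1 := by
  have := bn_conv 1 le_rfl
  simp [Finset.sum_range_succ, bn_zero] at this
  omega

theorem bn_step (m : ℕ) : bn (2*m+1) = (2*m+1) * bn (2*m) ∧
    bn (2*m+2) = (2*m+1) * bn (2*m+1) := by
  induction m with
  | zero =>
    have := bn_rec 0
    simp [bn_zero, bn_one] at this ⊢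
    exact this
  | succ m ih =>
    have h1 := bn_rec (2*m+1)
    have h2 := bn_rec (2*m+2)
    have e1 : bn (2*(m+1)+1) = (2*(m+1)+1) * bn (2*(m+1)) := by
      show bn (2*m+1+2) = (2*(m+1)+1) * bn (2*m+2)
      rw [h1]
      have := ih.2
      linear_combination (2*m+2) * (-this)
    refine ⟨e1, ?_⟩
    show bn (2*m+2+2) = (2*(m+1)+1) * bn (2*m+3)
    have e1' : bn (2*m+3) = (2*m+3) * bn (2*m+2) := e1
    rw [h2, show 2*m+2+1 = 2*m+3 from rfl, e1']
    ring

theorem bn_even (m : ℕ) : bn (2*m) = Nat.doubleFactorial (2*m-1) ^ 2 ∧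
    bn (2*m+1) = Nat.doubleFactorial (2*m+1) * Nat.doubleFactorial (2*m-1) := by
  induction m with
  | zero => simp [bn_zero, bn_one]
  | succ m ih =>
    have hd : Nat.doubleFactorial (2*m+1) = (2*m+1) * Nat.doubleFactorial (2*m-1) :=
      Nat.doubleFactorial_add_one _
    have e : bn (2*(m+1)) = Nat.doubleFactorial (2*(m+1)-1) ^ 2 := by
      show bn (2*m+2) = Nat.doubleFactorial (2*m+1) ^ 2
      rw [(bn_step m).2, ih.2, hd]; ring
    refine ⟨e, ?_⟩
    rw [(bn_step (m+1)).1, e, Nat.doubleFactorial_add_one (2*(m+1)), pow_two]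
    ring_nf

/-- The number of ballot permutations of `[n]` is `((n-1)!!)²` for even `n`,
and `n!!·(n-2)!!` for odd `n`. -/
theorem ballot_count_doubleFactorial (n : ℕ) (hn : 1 ≤ n) :
    Nat.card {π : Equiv.Perm (Fin n) // IsBallot n π} =
      if Even n then Nat.doubleFactorial (n - 1) ^ 2
      else Nat.doubleFactorial n * Nat.doubleFactorial (n - 2) := by
  rw [card_ballot]
  rcases Nat.even_or_odd' n with ⟨m, rfl | rfl⟩
  · rw [if_pos (even_two_mul m)]
    exact (bn_even m).1
  · rw [if_neg (by simp)]
    exact (bn_even m).2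
end

section
/- For every integer n ≥ 1 and every integer d with 0 ≤ d ≤ ⌊(n−1)/2⌋, the number of ballot permutations of [n] with exactly d descents equals the number of odd order permutations π of [n] with M(π) = d. -/
/-- The number of descents of a permutation of `[n]`. -/
def desNum (n : ℕ) (π : Equiv.Perm (Fin n)) : ℕ :=
  ((Finset.range (n - 1)).filter (fun i => permWord n π (i + 1) < permWord n π i)).card

/-- The cyclic descent number of a cycle `c = (c₁c₂⋯c_k)` (as a permutation):
the number of `i ∈ [k]` with `cᵢ > cᵢ₊₁` (indices cyclic), i.e. the number of
points `x` with `c x < x`. -/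
def cdes {n : ℕ} (c : Equiv.Perm (Fin n)) : ℕ :=
  (Finset.univ.filter (fun x : Fin n => c x < x)).card

/-- The cyclic ascent number: the number of points `x` with `x < c x`. -/
def casc {n : ℕ} (c : Equiv.Perm (Fin n)) : ℕ :=
  (Finset.univ.filter (fun x : Fin n => x < c x)).card

/-- `M(π) = Σ_c min(cdes c, casc c)`, summed over all cycles `c` of `π`. -/
def Mstat {n : ℕ} (π : Equiv.Perm (Fin n)) : ℕ :=
  ∑ c ∈ π.cycleFactorsFinset, min (cdes c) (casc c)

noncomputable section
open Polynomial Finset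
namespace BO

/-- height of a walk -/
def hgt (s : ℕ → Bool) (j : ℕ) : ℤ := ∑ k ∈ range j, if s k then 1 else -1

def wt (n : ℕ) (s : ℕ → Bool) : ℚ[X] := ∏ k ∈ range (n - 1), if s k then 1 else X

def Bal (n : ℕ) (s : ℕ → Bool) : Prop := ∀ j < n, 0 ≤ hgt s j
def RBal (n : ℕ) (s : ℕ → Bool) : Prop := ∀ j < n, hgt s (n - 1) ≤ hgt s j

open scoped Classical in
def PhiN (n : ℕ) (s : ℕ → Bool) : ℚ[X] := if Bal n s then wt n s else 0
open scoped Classical in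
def PhiR (n : ℕ) (s : ℕ → Bool) : ℚ[X] :=
  if n = 0 then 1 else if RBal n s then X * wt n s else 0

lemma hgt_add (s : ℕ → Bool) (i j : ℕ) :
    hgt s (i + j) = hgt s i + hgt (fun k => s (i + k)) j := by
  simp [hgt, sum_range_add]

lemma hgt_succ (s : ℕ → Bool) (i : ℕ) :
    hgt s (i + 1) = hgt s i + if s i then 1 else -1 := by
  simp [hgt, sum_range_succ]

lemma wt_split (s : ℕ → Bool) (i j : ℕ) :
    wt (i + 1 + (j + 1)) s = wt (i + 1) s * (if s i then 1 else X) *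
      wt (j + 1) (fun k => s (i + 1 + k)) := by
  unfold wt
  have : i + 1 + (j + 1) - 1 = (i + 1) + j := by omega
  rw [this, prod_range_add, prod_range_succ]
  simp

def FA (n : ℕ) (s : ℕ → Bool) (i : ℕ) : Prop :=
  i < n ∧ (∀ j < n, hgt s i ≤ hgt s j) ∧ ∀ j < i, hgt s i < hgt s j
def LA (n : ℕ) (s : ℕ → Bool) (i : ℕ) : Prop :=
  i < n ∧ (∀ j < n, hgt s i ≤ hgt s j) ∧ ∀ j < n, i < j → hgt s i < hgt s j

lemma exists_FA (n : ℕ) (hn : 0 < n) (s : ℕ → Bool) : ∃! i, FA n s i := by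
  classical
  obtain ⟨m, hm, hmin⟩ := exists_min_image (range n) (hgt s) ⟨0, by simpa⟩
  have hex : ∃ i, i < n ∧ ∀ j < n, hgt s i ≤ hgt s j :=
    ⟨m, by simpa using hm, fun j hj => hmin j (by simpa)⟩
  have h1 := Nat.find_spec hex
  refine ⟨Nat.find hex, ⟨h1.1, h1.2, fun j hj => ?_⟩, ?_⟩
  · have h2 := Nat.find_min hex hj
    by_contra hc
    exact h2 ⟨by omega, fun k hk => by have := h1.2 k hk; omega⟩
  · rintro y ⟨hy1, hy2, hy3⟩
    have h3 := h1.2 y hy1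
    have h4 := Nat.find_min' hex ⟨hy1, hy2⟩
    by_contra hc
    have := hy3 (Nat.find hex) (by omega)
    omega

lemma exists_LA (n : ℕ) (hn : 0 < n) (s : ℕ → Bool) : ∃! i, LA n s i := by
  classical
  obtain ⟨m, hm, hmin⟩ := exists_min_image (range n) (hgt s) ⟨0, by simpa⟩
  obtain ⟨i, hi, hmax⟩ := exists_max_image ((range n).filter (fun i => hgt s i = hgt s m)) id
    ⟨m, by simpa using hm⟩
  simp only [mem_filter, mem_range, id] at hi hmax hmin hm
  refine ⟨i, ⟨hi.1, fun j hj => hi.2 ▸ hmin j hj, fun j hj hij => ?_⟩, ?_⟩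
  · have h1 := hmin j hj
    by_contra hc
    have := hmax j ⟨hj, by omega⟩
    omega
  · rintro y ⟨hy1, hy2, hy3⟩
    have h1 := hmin y hy1
    have h2 := hy2 m hm
    have h3 := hmax y ⟨hy1, by omega⟩
    by_contra hc
    have := hy3 i hi.1 (by omega)
    omega

open scoped Classical in
lemma term_eq (n : ℕ) (hn : 0 < n) (s : ℕ → Bool) (i : ℕ) (hi : i ≤ n) :
    PhiR i s * PhiN (n - i) (fun k => s (i + k)) =
      wt n s * ((if FA n s i then 1 else 0) + X * (if 0 < i ∧ LA n s (i - 1) then 1 else 0)) := by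
  rcases Nat.eq_zero_or_pos i with rfl | h0
  · have : FA n s 0 ↔ Bal n s := by simp [FA, Bal, hn, hgt]
    simp only [PhiR, PhiN, this]
    by_cases h : Bal n s <;> simp [h]
  rcases hi.eq_or_lt with rfl | hlt
  · have : LA i s (i - 1) ↔ RBal i s := by
      unfold LA RBal
      constructor
      · exact fun h => h.2.1
      · exact fun h => ⟨by omega, h, fun j h1 h2 => by omega⟩
    have h2 : ¬ FA i s i := by simp [FA]
    simp only [PhiR, PhiN, this, h2]
    by_cases h : RBal i s
    · simp [h, h0, h0.ne', Bal, wt]; ring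
    · simp [h, h0.ne']
  obtain ⟨i, rfl⟩ := Nat.exists_eq_add_of_lt h0
  obtain ⟨j, rfl⟩ := Nat.exists_eq_add_of_lt hlt
  simp only [zero_add] at *
  have e1 : i + 1 + j + 1 - (i + 1) = j + 1 := by omega
  have hs := hgt_succ s i
  have hR : RBal (i+1) s ↔ ∀ k < i + 1, hgt s i ≤ hgt s k := by simp [RBal]
  have hB : Bal (j+1) (fun k => s (i + 1 + k)) ↔
      ∀ k < i + 1 + j + 1, i + 1 ≤ k → hgt s (i + 1) ≤ hgt s k := by
    constructor
    · intro h k h1 h2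
      have := h (k - (i + 1)) (by omega)
      have h3 := hgt_add s (i + 1) (k - (i + 1))
      rw [show i + 1 + (k - (i + 1)) = k by omega] at h3
      omega
    · intro h k hk
      have h3 := hgt_add s (i + 1) k
      have := h (i + 1 + k) (by omega) (by omega)
      omega
  rw [e1, show i + 1 + j + 1 = i + 1 + (j + 1) by omega, wt_split]
  rw [show i + 1 + (j + 1) = i + 1 + j + 1 by omega]
  simp only [PhiR, PhiN, Nat.add_sub_cancel]
  cases hsi : s i
  · simp only [hsi] at hs
    have hF : FA (i + 1 + j + 1) s (i + 1) ↔
      RBal (i+1) s ∧ Bal (j+1) (fun k => s (i + 1 + k)) := by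
      rw [hR, hB]
      constructor
      · rintro ⟨-, h1, h2⟩
        refine ⟨fun k hk => ?_, fun k hk _ => h1 k hk⟩
        have := h2 k hk
        simp at hs; omega
      · rintro ⟨h1, h2⟩
        refine ⟨by omega, fun k hk => ?_, fun k hk => ?_⟩
        · by_cases h : i + 1 ≤ k
          · exact h2 k hk h
          · have := h1 k (by omega)
            simp at hs; omega
        · have := h1 k (by omega)
          simp at hs; omega
    have hL : ¬ LA (i + 1 + j + 1) s i := by
      rintro ⟨-, h1, h2⟩
      have := h1 (i + 1) (by omega)
      simp at hs; omega
    by_cases h1 : RBal (i+1) s <;> by_cases h2 : Bal (j+1) (fun k => s (i + 1 + k)) <;>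
      simp [h1, h2, hF, hL]
    left; ring
  · simp only [hsi] at hs
    have hL : LA (i + 1 + j + 1) s i ↔
      RBal (i+1) s ∧ Bal (j+1) (fun k => s (i + 1 + k)) := by
      rw [hR, hB]
      constructor
      · rintro ⟨-, h1, h2⟩
        refine ⟨fun k hk => h1 k (by omega), fun k hk hk2 => ?_⟩
        have := h2 k hk (by omega)
        simp at hs; omega
      · rintro ⟨h1, h2⟩
        refine ⟨by omega, fun k hk => ?_, fun k hk hk2 => ?_⟩
        · by_cases h : i + 1 ≤ k
          · have := h2 k hk h
            simp at hs; omega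
          · exact h1 k (by omega)
        · have := h2 k (by omega) (by omega)
          simp at hs; omega
    have hF : ¬ FA (i + 1 + j + 1) s (i + 1) := by
      rintro ⟨-, h1, h2⟩
      have := h1 i (by omega)
      simp at hs; omega
    by_cases h1 : RBal (i+1) s <;> by_cases h2 : Bal (j+1) (fun k => s (i + 1 + k)) <;>
      simp [h1, h2, hF, hL]
    ring

lemma walk_sum (n : ℕ) (hn : 0 < n) (s : ℕ → Bool) :
    ∑ i ∈ range (n + 1), PhiR i s * PhiN (n - i) (fun k => s (i + k)) = (1 + X) * wt n s := by
  classical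
  rw [sum_congr rfl (fun i hi => term_eq n hn s i (by simp at hi; omega))]
  rw [← mul_sum, sum_add_distrib, ← mul_sum]
  obtain ⟨a, ha, hau⟩ := exists_FA n hn s
  obtain ⟨b, hb, hbu⟩ := exists_LA n hn s
  have h1 : ∑ i ∈ range (n + 1), (if FA n s i then (1 : ℚ[X]) else 0) = 1 := by
    rw [sum_eq_single a]
    · simp [ha]
    · intro c _ hc
      rw [if_neg (fun h => hc (hau c h))]
    · intro h
      exact absurd ha.1 (by simp at h; omega)
  have h2 : ∑ i ∈ range (n + 1), (if 0 < i ∧ LA n s (i - 1) then (1 : ℚ[X]) else 0) = 1 := by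
    rw [sum_eq_single (b + 1)]
    · simp [hb]
    · intro c _ hc
      rw [if_neg (fun h => hc (by have := hbu _ h.2; omega))]
    · intro h
      exact absurd hb.1 (by simp at h; omega)
  rw [h1, h2]; ring

end BO
end

noncomputable section
open Polynomial Finset
namespace BO

section lists
variable {α : Type*}

/-- arrangements of a finite set -/
def W (S : Finset α) : Finset (List α) := ⟨S.val.lists, Multiset.lists_nodup_finset S⟩

lemma mem_W {S : Finset α} {l : List α} : l ∈ W S ↔ l.Nodup ∧ ∀ x, x ∈ l ↔ x ∈ S := by
  show l ∈ Multiset.lists S.val ↔ _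
  rw [Multiset.mem_lists_iff]
  constructor
  · intro h
    have h' : S.val = (l : Multiset α) := h
    refine ⟨?_, fun x => ?_⟩
    · have := S.nodup; rw [h'] at this; simpa using this
    · rw [← Finset.mem_val, h']; simp
  · rintro ⟨h1, h2⟩
    show S.val = (l : Multiset α)
    rw [Multiset.Nodup.ext S.nodup (by simpa using h1)]
    intro x; simp [h2]

lemma length_W {S : Finset α} {l : List α} (h : l ∈ W S) : l.length = #S := by
  have h' : S.val = (l : Multiset α) := (Multiset.mem_lists_iff _ _).1 h
  rw [Finset.card_def, h']; simp

variable [LinearOrder α]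

/-- ascent indicator -/
def stp (l : List α) (k : ℕ) : Bool :=
  match l[k]?, l[k+1]? with
  | some a, some b => decide (a < b)
  | _, _ => false

lemma stp_lt (l : List α) (k : ℕ) (h : k + 1 < l.length) :
    stp l k = decide (l[k] < l[k+1]) := by
  have h' : k < l.length := by omega
  simp [stp, h, h']

lemma stp_drop (l : List α) (i k : ℕ) : stp (l.drop i) k = stp l (i + k) := by
  simp [stp, List.getElem?_drop, add_assoc]

lemma stp_take (l : List α) (i k : ℕ) (h : k + 1 < i) : stp (l.take i) k = stp l k := by
  have h' : k < i := by omega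
  simp [stp, h, h']

/-- weighted enumerator of the arrangements of `S` -/
def E (Φ : ℕ → (ℕ → Bool) → ℚ[X]) (S : Finset α) : ℚ[X] := ∑ l ∈ W S, Φ l.length (stp l)

lemma stp_map {β : Type*} [LinearOrder β] (e : β → α) (he : StrictMono e) (l : List β) :
    stp (l.map e) = stp l := by
  funext k
  simp only [stp, List.getElem?_map]
  cases l[k]? <;> cases l[k+1]? <;> simp [he.lt_iff_lt]

lemma E_eq (Φ : ℕ → (ℕ → Bool) → ℚ[X]) (S : Finset α) :
    E Φ S = E Φ (univ : Finset (Fin #S)) := by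
  unfold E
  symm
  let e := S.orderEmbOfFin rfl
  refine sum_bij (fun l _ => l.map e) ?_ ?_ ?_ ?_
  · intro l hl
    rw [mem_W] at hl ⊢
    refine ⟨hl.1.map e.injective, fun x => ?_⟩
    have : x ∈ S ↔ x ∈ Set.range e := by rw [range_orderEmbOfFin]; simp
    rw [this]
    simp only [List.mem_map, Set.mem_range]
    constructor
    · rintro ⟨a, -, h⟩; exact ⟨a, h⟩
    · rintro ⟨a, h⟩; exact ⟨a, (hl.2 a).2 (by simp), h⟩
  · intro l _ l' _ h
    exact List.map_injective_iff.2 e.injective h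
  · intro l hl
    have hS : ∀ x ∈ l, x ∈ Set.range e := by
      intro x hx
      rw [range_orderEmbOfFin]; simpa using ((mem_W.1 hl).2 x).1 hx
    have : l ∈ Set.range (List.map e) := by
      rw [Set.range_list_map]; exact hS
    obtain ⟨l', rfl⟩ := this
    refine ⟨l', ?_, rfl⟩
    rw [mem_W] at hl ⊢
    refine ⟨hl.1.of_map _, fun x => ?_⟩
    simp only [mem_univ, iff_true]
    have h1 : e x ∈ S := by simp [e]
    have := (hl.2 (e x)).2 h1
    rw [List.mem_map] at this
    obtain ⟨a, ha, hax⟩ := this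
    rwa [← e.injective hax]
  · intro l _
    rw [stp_map e e.strictMono]; simp

/-- enumerator sequence -/
def en (Φ : ℕ → (ℕ → Bool) → ℚ[X]) (n : ℕ) : ℚ[X] := E Φ (univ : Finset (Fin n))

lemma E_en (Φ : ℕ → (ℕ → Bool) → ℚ[X]) (S : Finset α) : E Φ S = en Φ #S := E_eq Φ S

lemma sum_split (S : Finset α) (F : List α → List α → ℚ[X]) :
    ∑ T ∈ S.powerset, ∑ l₁ ∈ W T, ∑ l₂ ∈ W (S \ T), F l₁ l₂ =
      ∑ l ∈ W S, ∑ i ∈ range (#S + 1), F (l.take i) (l.drop i) := by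
  simp_rw [← sum_product', sum_sigma']
  refine sum_bij' (fun p _ => (p.2.1 ++ p.2.2, p.2.1.length))
    (fun p _ => ⟨(p.1.take p.2).toFinset, (p.1.take p.2, p.1.drop p.2)⟩) ?_ ?_ ?_ ?_ ?_
  · rintro ⟨T, l1, l2⟩ h
    simp only [mem_sigma, mem_powerset, mem_product, mem_range] at h ⊢
    obtain ⟨hT, h1, h2⟩ := h
    have hl := length_W h1
    have := card_le_card hT
    rw [mem_W] at h1 h2
    refine ⟨mem_W.2 ⟨?_, ?_⟩, by omega⟩
    · refine List.Nodup.append h1.1 h2.1 ?_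
      intro x hx hx2
      have a := (h1.2 x).1 hx
      have b := (h2.2 x).1 hx2
      simp [a] at b
    · intro x
      rw [List.mem_append, h1.2, h2.2, mem_sdiff]
      constructor
      · rintro (h | h)
        · exact hT h
        · exact h.1
      · intro h; tauto
  · rintro ⟨l, i⟩ h
    simp only [mem_sigma, mem_powerset, mem_product, mem_range] at h ⊢
    obtain ⟨h1, h2⟩ := h
    rw [mem_W] at h1
    have hnd := h1.1
    rw [← List.take_append_drop i l, List.nodup_append] at hnd
    refine ⟨?_, mem_W.2 ⟨hnd.1, by simp⟩, mem_W.2 ⟨hnd.2.1, ?_⟩⟩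
    · intro x hx
      exact (h1.2 x).1 (List.mem_of_mem_take (by simpa using hx))
    · intro x
      have := h1.2 x
      rw [← List.take_append_drop i l, List.mem_append] at this
      rw [mem_sdiff, ← this, List.mem_toFinset]
      constructor
      · intro h
        exact ⟨Or.inr h, fun h' => hnd.2.2 x h' x h rfl⟩
      · rintro ⟨h, h'⟩; tauto
  · rintro ⟨T, l1, l2⟩ h
    simp only [mem_sigma, mem_powerset, mem_product, mem_range] at h ⊢
    obtain ⟨hT, h1, h2⟩ := h
    rw [mem_W] at h1
    have : l1.toFinset = T := by ext x; simp [h1.2]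
    simp [this]
  · rintro ⟨l, i⟩ h
    simp only [mem_product, mem_range] at h ⊢
    have := length_W h.1
    simp; omega
  · rintro ⟨T, l1, l2⟩ h
    simp

lemma sum_conv (S : Finset α) (Φ Ψ : ℕ → (ℕ → Bool) → ℚ[X]) :
    ∑ T ∈ S.powerset, E Φ T * E Ψ (S \ T) =
      ∑ k ∈ range (#S + 1), ((#S).choose k : ℚ[X]) * (en Φ k * en Ψ (#S - k)) := by
  have : ∀ T ∈ S.powerset, E Φ T * E Ψ (S \ T) =
      (fun k => en Φ k * en Ψ (#S - k)) #T := by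
    intro T hT
    rw [E_en, E_en, card_sdiff_of_subset (by simpa using hT)]
  rw [sum_congr rfl this]
  refine (sum_powerset_apply_card (fun k => en Φ k * en Ψ (#S - k))).trans ?_
  simp [nsmul_eq_mul]

end lists

lemma hgt_congr {s s' : ℕ → Bool} {j : ℕ} (h : ∀ k < j, s k = s' k) : hgt s j = hgt s' j :=
  sum_congr rfl (fun k hk => by rw [h k (by simpa using hk)])

lemma wt_congr {s s' : ℕ → Bool} {n : ℕ} (h : ∀ k, k + 1 < n → s k = s' k) : wt n s = wt n s' :=
  prod_congr rfl (fun k hk => by rw [h k (by simp at hk; omega)])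

lemma PhiR_congr {s s' : ℕ → Bool} {n : ℕ} (h : ∀ k, k + 1 < n → s k = s' k) :
    PhiR n s = PhiR n s' := by
  have : RBal n s ↔ RBal n s' := by
    unfold RBal
    refine forall₂_congr fun j hj => ?_
    rw [hgt_congr (s := s) (s' := s') (j := j) (fun k hk => h k (by omega)),
      hgt_congr (s := s) (s' := s') (j := n - 1) (fun k hk => h k (by omega))]
  simp only [PhiR, wt_congr h]
  split_ifs <;> first | rfl | tauto

/-- The Wiener-Hopf factorization, coefficientwise. -/
lemma factor (n : ℕ) (hn : 0 < n) :
    ∑ k ∈ range (n + 1), (n.choose k : ℚ[X]) * (en PhiR k * en PhiN (n - k)) =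
      (1 + X) * en wt n := by
  have h := sum_conv (univ : Finset (Fin n)) PhiR PhiN
  rw [card_univ, Fintype.card_fin] at h
  rw [← h]
  simp only [E, sum_mul_sum]
  rw [sum_split univ (fun l₁ l₂ => PhiR l₁.length (stp l₁) * PhiN l₂.length (stp l₂))]
  rw [en, E, mul_sum]
  refine sum_congr rfl fun l hl => ?_
  have hl' := length_W hl
  rw [card_univ, Fintype.card_fin] at hl' ⊢
  rw [hl', ← walk_sum n hn]
  refine sum_congr rfl fun i hi => ?_
  simp only [mem_range] at hi
  have h1 : (l.take i).length = i := by simp; omega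
  have h2 : (l.drop i).length = n - i := by simp; omega
  rw [h1, h2]
  congr 1
  · exact PhiR_congr (fun k hk => stp_take l i k hk)
  · congr 1; funext k; exact stp_drop l i k

end BO
end

noncomputable section
open Polynomial Finset
namespace BO

def wtv (n : ℕ) (s : ℕ → Bool) : ℚ[X] := if n = 0 then 1 else X * wt n s

section
variable {α : Type*} [LinearOrder α]

lemma wt_append (l₁ l₂ : List α) (h₁ : l₁ ≠ []) (h₂ : l₂ ≠ []) :
    wt (l₁ ++ l₂).length (stp (l₁ ++ l₂)) = wt l₁.length (stp l₁) *
      (if l₁.getLast h₁ < l₂.head h₂ then 1 else X) * wt l₂.length (stp l₂) := by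
  obtain ⟨i, hi⟩ : ∃ i, l₁.length = i + 1 := Nat.exists_eq_succ_of_ne_zero (by simpa)
  obtain ⟨j, hj⟩ : ∃ j, l₂.length = j + 1 := Nat.exists_eq_succ_of_ne_zero (by simpa)
  rw [List.length_append, hi, hj, wt_split]
  have e1 : wt (i + 1) (stp (l₁ ++ l₂)) = wt (i + 1) (stp l₁) := by
    apply wt_congr
    intro k hk
    have := stp_take (l₁ ++ l₂) (i + 1) k hk
    rw [← hi, List.take_left] at this
    exact this.symm
  have e2 : (fun k => stp (l₁ ++ l₂) (i + 1 + k)) = stp l₂ := by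
    funext k
    rw [← stp_drop, ← hi, List.drop_left]
  have e3 : stp (l₁ ++ l₂) i = decide (l₁.getLast h₁ < l₂.head h₂) := by
    rw [stp_lt _ _ (by simp; omega)]
    congr 2
    · rw [List.getElem_append_left (by omega), List.getLast_eq_getElem]
      simp [hi]
    · rw [List.getElem_append_right (by omega), List.head_eq_getElem]
      simp [hi]
  rw [e1, e2, e3]; simp

lemma wt_max (M : α) (l₁ l₂ : List α) (h₁ : ∀ x ∈ l₁, x < M) (h₂ : ∀ x ∈ l₂, x < M) :
    wt (l₁ ++ M :: l₂).length (stp (l₁ ++ M :: l₂)) =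
      wt l₁.length (stp l₁) * wtv l₂.length (stp l₂) := by
  have key : wt (M :: l₂).length (stp (M :: l₂)) = wtv l₂.length (stp l₂) := by
    by_cases h : l₂ = []
    · subst h; simp [wt, wtv]
    · have := wt_append [M] l₂ (by simp) h
      simp only [List.cons_append, List.nil_append] at this
      rw [this, if_neg]
      · simp [wtv, h, wt]
      · simpa using (h₂ _ (List.head_mem h)).le
  by_cases h : l₁ = []
  · subst h
    simp only [List.nil_append, key]; simp [wt]
  · rw [wt_append l₁ (M :: l₂) h (by simp), if_pos, key]
    · ring
    · simpa using h₁ _ (List.getLast_mem h)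

lemma sum_insert_max (S : Finset α) (M : α) (hM : M ∉ S) (F : List α → ℚ[X]) :
    ∑ l ∈ W (insert M S), F l =
      ∑ T ∈ S.powerset, ∑ l₁ ∈ W T, ∑ l₂ ∈ W (S \ T), F (l₁ ++ M :: l₂) := by
  simp_rw [← sum_product', sum_sigma']
  symm
  refine sum_bij (fun p _ => p.2.1 ++ M :: p.2.2) ?_ ?_ ?_ ?_
  · rintro ⟨T, l1, l2⟩ h
    simp only [mem_sigma, mem_powerset, mem_product] at h ⊢
    obtain ⟨hT, h1, h2⟩ := h
    rw [mem_W] at h1 h2 ⊢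
    refine ⟨?_, fun x => ?_⟩
    · rw [List.nodup_append, List.nodup_cons]
      refine ⟨h1.1, ⟨?_, h2.1⟩, ?_⟩
      · rw [h2.2]; simp [hM]
      · intro a ha b hb
        rw [h1.2] at ha
        rw [List.mem_cons, h2.2] at hb
        rintro rfl
        rcases hb with rfl | hb
        · exact hM (hT ha)
        · simp [ha] at hb
    · rw [List.mem_append, List.mem_cons, h1.2, h2.2, mem_sdiff, mem_insert]
      have := @hT x
      tauto
  · rintro ⟨T, l1, l2⟩ h ⟨T', l1', l2'⟩ h' heq
    simp only [mem_sigma, mem_powerset, mem_product] at h h' heq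
    obtain ⟨hT, h1, h2⟩ := h
    obtain ⟨hT', h1', h2'⟩ := h'
    rw [mem_W] at h1 h1'
    have a1 : M ∉ l1 := fun h => hM (hT ((h1.2 _).1 h))
    have a2 : M ∉ l1' := fun h => hM (hT' ((h1'.2 _).1 h))
    have hlen : l1.length = l1'.length := by
      have := congrArg (List.idxOf M) heq
      simpa [List.idxOf_append, a1, a2] using this
    obtain ⟨rfl, h3⟩ := List.append_inj heq hlen
    have : T = T' := by ext x; rw [← h1.2, h1'.2]
    subst this
    simp at h3
    simp [h3]
  · intro l hl
    rw [mem_W] at hl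
    obtain ⟨l1, l2, rfl⟩ := List.append_of_mem ((hl.2 M).2 (by simp))
    have hnd := hl.1
    rw [List.nodup_append, List.nodup_cons] at hnd
    obtain ⟨n1, ⟨n2, n3⟩, n4⟩ := hnd
    have hm : ∀ x, x ∈ l1 ∨ x = M ∨ x ∈ l2 ↔ x = M ∨ x ∈ S := by
      intro x; have := hl.2 x; simpa using this
    have n5 : M ∉ l1 := fun h => n4 M h M (by simp) rfl
    refine ⟨⟨l1.toFinset, l1, l2⟩, ?_, rfl⟩
    simp only [mem_sigma, mem_powerset, mem_product]
    refine ⟨?_, mem_W.2 ⟨n1, by simp⟩, mem_W.2 ⟨n3, fun x => ?_⟩⟩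
    · intro x hx
      rw [List.mem_toFinset] at hx
      rcases (hm x).1 (Or.inl hx) with rfl | h
      · exact absurd hx n5
      · exact h
    · rw [mem_sdiff, List.mem_toFinset]
      constructor
      · intro hx
        refine ⟨?_, fun h => n4 x h x (by simp [hx]) rfl⟩
        rcases (hm x).1 (Or.inr (Or.inr hx)) with rfl | h
        · exact absurd hx n2
        · exact h
      · rintro ⟨hx, hx'⟩
        rcases (hm x).2 (Or.inr hx) with h | rfl | h
        · exact absurd h hx'
        · exact absurd hx hM
        · exact h
  · rintro ⟨T, l1, l2⟩ h
    rfl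
end

lemma eul_rec (n : ℕ) : en wt (n + 1) =
    ∑ k ∈ range (n + 1), (n.choose k : ℚ[X]) * (en wt k * en wtv (n - k)) := by
  let M : Fin (n + 1) := Fin.last n
  let S : Finset (Fin (n + 1)) := univ.erase M
  have hM : M ∉ S := by simp [S]
  have hS : insert M S = univ := by simp [S]
  have hc : #S = n := by simp [S]
  have hlt : ∀ x ∈ S, x < M := by
    intro x hx
    simp only [S, mem_erase] at hx
    exact Fin.lt_last_iff_ne_last.2 hx.1
  have h := sum_conv S wt wtv
  rw [hc] at h
  rw [← h, en, E, ← hS, sum_insert_max S M hM]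
  refine sum_congr rfl fun T hT => ?_
  rw [mem_powerset] at hT
  rw [E, E, sum_mul_sum]
  refine sum_congr rfl fun l1 h1 => sum_congr rfl fun l2 h2 => ?_
  rw [mem_W] at h1 h2
  exact wt_max M l1 l2 (fun x hx => hlt x (hT ((h1.2 x).1 hx)))
    (fun x hx => hlt x ((mem_sdiff.1 ((h2.2 x).1 hx)).1))

def ds (n : ℕ) (s : ℕ → Bool) : ℕ := #{k ∈ range (n - 1) | s k = false}
def as (n : ℕ) (s : ℕ → Bool) : ℕ := #{k ∈ range (n - 1) | s k = true}

lemma as_add_ds (n : ℕ) (s : ℕ → Bool) : as n s + ds n s = n - 1 := by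
  unfold as ds
  have := card_filter_add_card_filter_not (s := range (n - 1)) (fun k => s k = true)
  simpa using this

lemma wt_eq (n : ℕ) (s : ℕ → Bool) : wt n s = X ^ ds n s := by
  unfold wt ds
  rw [card_filter, ← prod_pow_eq_pow_sum]
  refine prod_congr rfl fun k _ => ?_
  cases s k <;> simp

lemma hgt_eq (n : ℕ) (s : ℕ → Bool) : hgt s (n - 1) = as n s - ds n s := by
  unfold hgt as ds
  rw [card_filter, card_filter]
  push_cast
  rw [← sum_sub_distrib]
  refine sum_congr rfl fun k _ => ?_
  cases s k <;> simp

def wtr (n : ℕ) (s : ℕ → Bool) : ℚ[X] := X ^ as n s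

lemma en_wtr (n : ℕ) : en wtr n = en wt n := by
  unfold en E
  refine sum_bij' (fun l _ => l.map Fin.rev) (fun l _ => l.map Fin.rev) ?_ ?_ ?_ ?_ ?_
  · intro l hl
    rw [mem_W] at hl ⊢
    refine ⟨hl.1.map Fin.rev_injective, fun x => ?_⟩
    simp only [mem_univ, iff_true] at hl ⊢
    exact List.mem_map.2 ⟨x.rev, hl.2 _, by simp⟩
  · intro l hl
    rw [mem_W] at hl ⊢
    refine ⟨hl.1.map Fin.rev_injective, fun x => ?_⟩
    simp only [mem_univ, iff_true] at hl ⊢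
    exact List.mem_map.2 ⟨x.rev, hl.2 _, by simp⟩
  · intro l hl; simp [Function.comp_def]
  · intro l hl; simp [Function.comp_def]
  · intro l hl
    rw [mem_W] at hl
    rw [wt_eq, wtr, List.length_map]
    congr 1
    unfold as ds
    congr 1
    refine filter_congr fun k hk => ?_
    rw [mem_range] at hk
    rw [stp_lt _ _ (by omega), stp_lt _ _ (by simp; omega)]
    simp only [List.getElem_map, Fin.rev_lt_rev, decide_eq_true_eq, decide_eq_false_iff_not, not_lt]
    refine ⟨le_of_lt, fun h => lt_of_le_of_ne h fun h' => ?_⟩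
    have := (hl.1.getElem_inj_iff).1 h'
    omega

def Phic (n : ℕ) (s : ℕ → Bool) : ℚ[X] :=
  if n = 0 then 1 else if Even n then X ^ min (ds n s + 1) (as n s + 1) else 0
def PhicB (n : ℕ) (s : ℕ → Bool) : ℚ[X] :=
  if n = 0 then X else if Even n then X ^ max (ds n s + 1) (as n s + 1) else 0

lemma W_zero : W (univ : Finset (Fin 0)) = {[]} := by
  ext l
  simp only [mem_W, mem_singleton]
  constructor
  · intro _
    cases l with
    | nil => rfl
    | cons a _ => exact a.elim0
  · rintro rfl; simp

lemma en_zero (Φ : ℕ → (ℕ → Bool) → ℚ[X]) : en Φ 0 = Φ 0 (fun _ => false) := by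
  unfold en E
  rw [W_zero, sum_singleton]
  congr 1

lemma en_congr {Φ Ψ : ℕ → (ℕ → Bool) → ℚ[X]} {n : ℕ} (h : ∀ s, Φ n s = Ψ n s) :
    en Φ n = en Ψ n := by
  unfold en E
  refine sum_congr rfl fun l hl => ?_
  have := length_W hl
  rw [card_univ, Fintype.card_fin] at this
  rw [this, h]

lemma en_add (Φ Ψ : ℕ → (ℕ → Bool) → ℚ[X]) (n : ℕ) :
    en (fun n s => Φ n s + Ψ n s) n = en Φ n + en Ψ n := by
  unfold en E; rw [sum_add_distrib]

lemma en_mul (Φ : ℕ → (ℕ → Bool) → ℚ[X]) (p : ℚ[X]) (n : ℕ) :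
    en (fun n s => p * Φ n s) n = p * en Φ n := by
  unfold en E; rw [mul_sum]

lemma en_c (n : ℕ) : en Phic n + en PhicB n =
    if n = 0 then 1 + X else if Even n then 2 * X * en wt n else 0 := by
  split_ifs with h h2
  · subst h; simp [en_zero, Phic, PhicB]
  · have : 2 * X * en wt n = X * en wt n + X * en wtr n := by rw [en_wtr]; ring
    rw [this, ← en_mul, ← en_mul, ← en_add, ← en_add]
    refine en_congr fun s => ?_
    simp only [Phic, PhicB, h, h2, wt_eq, wtr, if_true, if_false]
    rcases le_total (ds n s) (as n s) with h | h
    · rw [min_eq_left (by omega), max_eq_right (by omega)]; ring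
    · rw [min_eq_right (by omega), max_eq_left (by omega)]; ring
  · rw [← en_add]
    have : (0 : ℚ[X]) = en (fun _ _ => 0) n := by simp [en, E]
    rw [this]
    refine en_congr fun s => ?_
    simp [Phic, PhicB, h, h2]

lemma en_wtv (n : ℕ) : en wtv n = if n = 0 then 1 else X * en wt n := by
  split_ifs with h
  · subst h; simp [en_zero, wtv]
  · rw [← en_mul]
    exact en_congr fun s => by simp [wtv, h]

/-- support conditions -/
lemma en_coeff (Φ : ℕ → (ℕ → Bool) → ℚ[X]) (n j : ℕ) (h : ∀ s, (Φ n s).coeff j = 0) :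
    (en Φ n).coeff j = 0 := by
  unfold en E
  rw [finsetSum_coeff]
  refine sum_eq_zero fun l hl => ?_
  have := length_W hl
  rw [card_univ, Fintype.card_fin] at this
  rw [this, h]

lemma supp_N (n j : ℕ) (hn : 0 < n) (hj : n ≤ 2 * j) : (en PhiN n).coeff j = 0 := by
  refine en_coeff _ _ _ fun s => ?_
  unfold PhiN
  split_ifs with h
  · have h1 := h (n - 1) (by omega)
    rw [hgt_eq] at h1
    have := as_add_ds n s
    rw [wt_eq, coeff_X_pow, if_neg (by omega)]
  · simp

lemma supp_R (n j : ℕ) (hn : 0 < n) (hj : 2 * j ≤ n) : (en PhiR n).coeff j = 0 := by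
  refine en_coeff _ _ _ fun s => ?_
  unfold PhiR
  rw [if_neg (by omega)]
  split_ifs with h
  · have h1 := h 0 (by omega)
    rw [hgt_eq] at h1
    simp only [hgt, range_zero, sum_empty] at h1
    have := as_add_ds n s
    rw [wt_eq, ← pow_succ', coeff_X_pow, if_neg (by omega)]
  · simp

lemma supp_c (n j : ℕ) (hj : n + 1 ≤ 2 * j) : (en Phic n).coeff j = 0 := by
  refine en_coeff _ _ _ fun s => ?_
  unfold Phic
  split_ifs with h h2
  · rw [coeff_one, if_neg (by omega)]
  · have := as_add_ds n s
    obtain ⟨r, hr⟩ := h2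
    rw [coeff_X_pow, if_neg (by omega)]
  · simp

lemma supp_cB (n j : ℕ) (hj : 2 * j ≤ n + 1) : (en PhicB n).coeff j = 0 := by
  refine en_coeff _ _ _ fun s => ?_
  unfold PhicB
  split_ifs with h h2
  · rw [coeff_X, if_neg (by omega)]
  · have := as_add_ds n s
    obtain ⟨r, hr⟩ := h2
    rw [coeff_X_pow, if_neg (by omega)]
  · simp

end BO
end

noncomputable section
open Polynomial Finset
namespace BO

lemma leib {R : Type*} [CommRing R] (a b : PowerSeries R) :
    PowerSeries.derivative R (a * b) =
      a * PowerSeries.derivative R b + b * PowerSeries.derivative R a := by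
  rw [Derivation.leibniz]; rfl

abbrev PS := PowerSeries ℚ[X]

def egf (a : ℕ → ℚ[X]) : PS := PowerSeries.mk fun n => ((n.factorial : ℚ)⁻¹) • a n

lemma egf_coeff (a : ℕ → ℚ[X]) (n : ℕ) :
    PowerSeries.coeff n (egf a) = ((n.factorial : ℚ)⁻¹) • a n := by simp [egf]

lemma egf_mul (a b : ℕ → ℚ[X]) : egf a * egf b =
    egf (fun n => ∑ k ∈ range (n + 1), (n.choose k : ℚ[X]) * (a k * b (n - k))) := by
  ext1 n
  rw [PowerSeries.coeff_mul, egf_coeff,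
    Nat.sum_antidiagonal_eq_sum_range_succ
      (fun i j => PowerSeries.coeff i (egf a) * PowerSeries.coeff j (egf b)), smul_sum]
  refine sum_congr rfl fun k hk => ?_
  rw [mem_range] at hk
  rw [egf_coeff, egf_coeff, smul_mul_smul_comm]
  rw [← nsmul_eq_mul, ← Nat.cast_smul_eq_nsmul ℚ, smul_smul]
  congr 1
  rw [Nat.cast_choose ℚ (by omega : k ≤ n)]
  have := Nat.factorial_ne_zero n
  field_simp

lemma egf_deriv (a : ℕ → ℚ[X]) :
    PowerSeries.derivative ℚ[X] (egf a) = egf (fun n => a (n + 1)) := by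
  ext1 n
  rw [PowerSeries.coeff_derivative, egf_coeff, egf_coeff]
  rw [show ((n : ℚ[X]) + 1) = ((n + 1 : ℕ) : ℚ[X]) by push_cast; rfl, mul_comm,
    ← nsmul_eq_mul, ← Nat.cast_smul_eq_nsmul ℚ, smul_smul]
  congr 1
  rw [Nat.factorial_succ]
  push_cast
  have := Nat.factorial_ne_zero n
  field_simp

lemma egf_inj {a b : ℕ → ℚ[X]} (h : egf a = egf b) : a = b := by
  funext n
  have := congrArg (PowerSeries.coeff n) h
  rw [egf_coeff, egf_coeff] at this
  exact smul_right_injective _ (inv_ne_zero (by exact_mod_cast Nat.factorial_ne_zero n)) this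

lemma ode_zero (D G : PS) (h0 : PowerSeries.coeff 0 D = 0)
    (h : PowerSeries.derivative ℚ[X] D = D * G) : D = 0 := by
  ext1 n
  rw [map_zero]
  induction n using Nat.strong_induction_on with
  | _ n ih =>
    cases n with
    | zero => exact h0
    | succ n =>
      have h1 := congrArg (PowerSeries.coeff n) h
      rw [PowerSeries.coeff_derivative, PowerSeries.coeff_mul] at h1
      rw [sum_eq_zero] at h1
      · rcases mul_eq_zero.1 h1 with h2 | h2
        · exact h2
        · exact absurd h2 (by exact_mod_cast Nat.succ_ne_zero n)
      · rintro ⟨i, j⟩ hij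
        rw [HasAntidiagonal.mem_antidiagonal] at hij
        rw [ih i (by simp at hij; omega), zero_mul]

lemma deriv_rescale (F : PS) : PowerSeries.derivative ℚ[X] (PowerSeries.rescale (-1) F) =
    - PowerSeries.rescale (-1) (PowerSeries.derivative ℚ[X] F) := by
  ext1 n
  rw [PowerSeries.coeff_derivative, map_neg, PowerSeries.coeff_rescale, PowerSeries.coeff_rescale,
    PowerSeries.coeff_derivative]
  ring

def t : PS := PowerSeries.C (X : ℚ[X])

lemma dt : PowerSeries.derivative ℚ[X] t = 0 := PowerSeries.derivative_C

def P : PS := egf (en wt)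

lemma coeff_t_mul (F : PS) (n : ℕ) : PowerSeries.coeff n (t * F) = X * PowerSeries.coeff n F := by
  simp [t]

lemma en_wt_zero : en wt 0 = 1 := by simp [en_zero, wt]

lemma P_ode : PowerSeries.derivative ℚ[X] P = P * (1 + t * (P - 1)) := by
  have : (1 + t * (P - 1)) = egf (en wtv) := by
    ext1 n
    rw [map_add, coeff_t_mul, map_sub, egf_coeff, P, egf_coeff, en_wtv, PowerSeries.coeff_one]
    split_ifs with h
    · subst h; simp [en_wt_zero]
    · simp
  rw [this, P, egf_deriv, egf_mul]
  congr 1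
  funext n
  exact eul_rec n

def f : PS := 1 + (1 + t) * (P - 1)
def Pm : PS := PowerSeries.rescale (-1) P

lemma Pm_ode : PowerSeries.derivative ℚ[X] Pm = - (Pm * (1 + t * (Pm - 1))) := by
  unfold Pm
  rw [deriv_rescale, P_ode]
  have : PowerSeries.rescale (-1) t = t := by
    ext1 n
    rw [PowerSeries.coeff_rescale, t, PowerSeries.coeff_C]
    split_ifs with h
    · simp [h]
    · simp
  simp [this]

lemma f_ode' : PowerSeries.derivative ℚ[X] f = (1 + t) * (P * (1 + t * (P - 1))) := by
  simp [f, dt, P_ode]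

lemma P0 : PowerSeries.coeff 0 P = 1 := by simp [P, egf_coeff, en_wt_zero]

lemma reflect : (Pm - 1) * f + (P - 1) = 0 := by
  apply ode_zero _ (t * ((P - 1) - (Pm - 1)))
  · have h : PowerSeries.coeff 0 Pm = 1 := by simp only [Pm, PowerSeries.coeff_rescale, P0]; simp
    have h1 := P0
    simp only [PowerSeries.coeff_zero_eq_constantCoeff] at *
    simp [h, h1]
  · have h1 := f_ode'
    rw [map_add, map_sub, leib, map_sub, h1, Pm_ode, P_ode]
    rw [show PowerSeries.derivative ℚ[X] (1 : PS) = 0 from PowerSeries.derivative_one]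
    unfold f
    ring

lemma f_ode : PowerSeries.derivative ℚ[X] f = f * ((1 + t) + t * ((P - 1) + (Pm - 1))) := by
  rw [f_ode']
  have h := reflect
  have : f * ((1 + t) + t * ((P - 1) + (Pm - 1))) =
    (1 + t) * (P * (1 + t * (P - 1))) + t * ((Pm - 1) * f + (P - 1)) := by
    unfold f; ring
  rw [this, h]; ring

/-- solution of `G' = c G` as a sequence -/
def sol (c : ℕ → ℚ[X]) : ℕ → ℚ[X]
  | 0 => 1
  | n + 1 => ∑ k ∈ (range (n + 1)).attach, (n.choose k : ℚ[X]) * (c k * sol c (n - k))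
decreasing_by omega

lemma sol_zero (c : ℕ → ℚ[X]) : sol c 0 = 1 := by rw [sol]

lemma sol_succ (c : ℕ → ℚ[X]) (n : ℕ) : sol c (n + 1) =
    ∑ k ∈ range (n + 1), (n.choose k : ℚ[X]) * (c k * sol c (n - k)) := by
  rw [sol]
  exact sum_attach (range (n + 1)) (fun k => (n.choose k : ℚ[X]) * (c k * sol c (n - k)))

lemma sol_ode (c : ℕ → ℚ[X]) :
    PowerSeries.derivative ℚ[X] (egf (sol c)) = egf c * egf (sol c) := by
  rw [egf_deriv, egf_mul]
  congr 1; funext n; exact sol_succ c n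

def G : PS := egf (sol (en Phic))
def GB : PS := egf (sol (en PhicB))

lemma C_sum : egf (en Phic) + egf (en PhicB) = (1 + t) + t * ((P - 1) + (Pm - 1)) := by
  ext1 n
  have h : PowerSeries.coeff n (1 + t) = if n = 0 then 1 + X else 0 := by
    rw [map_add, PowerSeries.coeff_one, t, PowerSeries.coeff_C]; split_ifs <;> simp
  rw [map_add, egf_coeff, egf_coeff, ← smul_add, en_c, map_add, coeff_t_mul, h, map_add, map_sub,
    map_sub, Pm, PowerSeries.coeff_rescale, P, egf_coeff, PowerSeries.coeff_one]
  split_ifs with h1 h2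
  · subst h1; simp [en_wt_zero]
  · rw [h2.neg_one_pow, show (2 * X * en wt n : ℚ[X]) = X * en wt n + X * en wt n by ring]
    simp only [smul_eq_C_mul]; ring
  · rw [(Nat.not_even_iff_odd.1 h2).neg_one_pow]
    simp

lemma GGB : G * GB = f := by
  rw [← sub_eq_zero]
  apply ode_zero _ ((1 + t) + t * ((P - 1) + (Pm - 1)))
  · have h1 : PowerSeries.coeff 0 G = 1 := by simp [G, egf_coeff, sol_zero]
    have h2 : PowerSeries.coeff 0 GB = 1 := by simp [GB, egf_coeff, sol_zero]
    have h3 := P0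
    simp only [PowerSeries.coeff_zero_eq_constantCoeff] at *
    simp [f, h1, h2, h3]
  · rw [map_sub, leib, f_ode, ← C_sum]
    have h1 := sol_ode (en Phic)
    have h2 := sol_ode (en PhicB)
    rw [G, GB, h1, h2]
    ring

lemma KKB : egf (en PhiR) * egf (en PhiN) = f := by
  rw [egf_mul]
  ext1 n
  rw [egf_coeff]
  rcases Nat.eq_zero_or_pos n with rfl | h
  · have h3 := P0
    simp only [PowerSeries.coeff_zero_eq_constantCoeff] at *
    simp [f, h3, en_zero, PhiR, PhiN, Bal, wt]
  · rw [factor n h]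
    have : f = 1 + ((P - 1) + t * (P - 1)) := by unfold f; ring
    rw [this, map_add, map_add, coeff_t_mul, map_sub, PowerSeries.coeff_one, if_neg h.ne', P,
      egf_coeff]
    simp only [smul_eq_C_mul]; ring

lemma supp_sol (n j : ℕ) (hj : n ≤ 2 * j) (h : n = 0 → 0 < j) :
    (sol (en Phic) n).coeff j = 0 := by
  induction n using Nat.strong_induction_on generalizing j with
  | _ n ih =>
    cases n with
    | zero => rw [sol_zero, coeff_one, if_neg (by have := h rfl; omega)]
    | succ n =>
      rw [sol_succ, finsetSum_coeff]
      refine sum_eq_zero fun k hk => ?_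
      rw [mem_range] at hk
      rw [← nsmul_eq_mul, coeff_smul, coeff_mul, sum_eq_zero, smul_zero]
      rintro ⟨a, b⟩ hab
      rw [HasAntidiagonal.mem_antidiagonal] at hab
      simp only at hab ⊢
      by_cases h1 : k + 1 ≤ 2 * a
      · rw [supp_c k a h1, zero_mul]
      · rw [ih (n - k) (by omega) b (by omega) (by omega), mul_zero]

lemma supp_solB (n j : ℕ) (hj : 2 * j ≤ n) (h : n = 0 → False) :
    (sol (en PhicB) n).coeff j = 0 := by
  induction n using Nat.strong_induction_on generalizing j with
  | _ n ih =>
    cases n with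
    | zero => exact absurd rfl h
    | succ n =>
      rw [sol_succ, finsetSum_coeff]
      refine sum_eq_zero fun k hk => ?_
      rw [mem_range] at hk
      rw [← nsmul_eq_mul, coeff_smul, coeff_mul, sum_eq_zero, smul_zero]
      rintro ⟨a, b⟩ hab
      rw [HasAntidiagonal.mem_antidiagonal] at hab
      simp only at hab ⊢
      by_cases h1 : 2 * a ≤ k + 1
      · rw [supp_cB k a h1, zero_mul]
      · rw [ih (n - k) (by omega) b (by omega) (by omega), mul_zero]

lemma seq_eq (n : ℕ) : en PhiN n = sol (en Phic) n ∧ en PhiR n = sol (en PhicB) n := by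
  have h := KKB.trans GGB.symm
  rw [mul_comm G, G, GB, egf_mul, egf_mul] at h
  have h := egf_inj h
  induction n using Nat.strong_induction_on with
  | _ n ih =>
    rcases Nat.eq_zero_or_pos n with rfl | hn
    · simp [en_zero, PhiR, PhiN, Bal, wt, sol_zero]
    have h1 := congrFun h n
    obtain ⟨m, rfl⟩ : ∃ m, n = m + 1 := ⟨n - 1, by omega⟩
    rw [sum_range_succ, sum_range_succ', sum_range_succ, sum_range_succ'] at h1
    have h2 : ∀ k ∈ range m, (((m + 1).choose (k + 1) : ℕ) : ℚ[X]) *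
        (en PhiR (k + 1) * en PhiN (m + 1 - (k + 1))) =
        (((m + 1).choose (k + 1) : ℕ) : ℚ[X]) *
        (sol (en PhicB) (k + 1) * sol (en Phic) (m + 1 - (k + 1))) := by
      intro k hk
      rw [mem_range] at hk
      rw [(ih (k + 1) (by omega)).2, (ih (m + 1 - (k + 1)) (by omega)).1]
    rw [sum_congr rfl h2, (ih 0 (by omega)).2] at h1
    simp only [Nat.sub_self, (ih 0 (by omega)).1, sol_zero] at h1
    have h3 : en PhiN (m + 1) + en PhiR (m + 1) = sol (en Phic) (m + 1) + sol (en PhicB) (m + 1) := by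
      simp at h1
      linear_combination h1
    have h4 : en PhiN (m + 1) = sol (en Phic) (m + 1) := by
      ext j
      by_cases hj : m + 1 ≤ 2 * j
      · rw [supp_N _ _ hn hj, supp_sol _ _ hj (by omega)]
      · have h5 := congrArg (fun p => p.coeff j) h3
        simp only [coeff_add] at h5
        rw [supp_R _ _ hn (by omega), supp_solB _ _ (by omega) (by omega)] at h5
        simpa using h5
    refine ⟨h4, ?_⟩
    rw [h4] at h3
    exact add_left_cancel h3

end BO
end

noncomputable section
open Polynomial Finset
namespace BO

open Equiv.Perm in
def phi {N : ℕ} (c : Equiv.Perm (Fin N)) : ℚ[X] :=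
  if Odd #c.support then X ^ min (cdes c) (casc c) else 0

def om {N : ℕ} (σ : Equiv.Perm (Fin N)) : ℚ[X] := ∏ c ∈ σ.cycleFactorsFinset, phi c

def Q {N : ℕ} (S : Finset (Fin N)) : ℚ[X] := ∑ σ : Equiv.Perm (Fin N) with σ.support ⊆ S, om σ

lemma om_mul {N : ℕ} {f g : Equiv.Perm (Fin N)} (h : f.Disjoint g) : om (f * g) = om f * om g := by
  unfold om
  rw [h.cycleFactorsFinset_mul_eq_union, prod_union h.disjoint_cycleFactorsFinset]

lemma cdes_add_casc {N : ℕ} (c : Equiv.Perm (Fin N)) : cdes c + casc c = #c.support := by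
  unfold cdes casc
  rw [← card_union_of_disjoint]
  · congr 1; ext x; simp
  · rw [disjoint_left]; intro x; simp only [mem_filter, mem_univ, true_and]; exact fun h => h.asymm

lemma cdes_formPerm {N : ℕ} (M : Fin N) (l : List (Fin N)) (hl : (M :: l).Nodup) (h : ∀ x ∈ l, x < M)
    (h0 : l ≠ []) : cdes (M :: l).formPerm = ds l.length (stp l) + 1 := by
  have hM : M ∉ l := (List.nodup_cons.1 hl).1
  have hnd := (List.nodup_cons.1 hl).2
  have hlen : 0 < l.length := List.length_pos_iff.2 h0
  have f0 : (M :: l).formPerm M = l[0] := by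
    have := List.formPerm_apply_getElem (M :: l) hl 0 (by simp)
    have e : (0 + 1) % (M :: l).length = 1 := Nat.mod_eq_of_lt (by simp; omega)
    simp only [e] at this
    simpa using this
  have f1 : ∀ k (hk : k + 1 < l.length), (M :: l).formPerm l[k] = l[k+1] := by
    intro k hk
    have := List.formPerm_apply_getElem (M :: l) hl (k + 1) (by simp; omega)
    have e : (k + 1 + 1) % (M :: l).length = k + 1 + 1 := Nat.mod_eq_of_lt (by simp; omega)
    simp only [e] at this
    simpa using this
  have f2 : ∀ k (hk : k + 1 = l.length), (M :: l).formPerm l[k] = M := by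
    intro k hk
    have := List.formPerm_apply_getElem (M :: l) hl (k + 1) (by simp; omega)
    have e : (k + 1 + 1) % (M :: l).length = 0 := by simp [hk]
    simp only [e] at this
    simpa using this
  have key : (univ.filter (fun x : Fin N => (M :: l).formPerm x < x)) =
      insert M (image (fun k => l.getD k M) {k ∈ range (l.length - 1) | stp l k = false}) := by
    ext x
    simp only [mem_filter, mem_univ, true_and, mem_insert, mem_image, mem_range]
    constructor
    · intro hx
      by_cases hxM : x = M
      · exact Or.inl hxM
      right
      have hxl : x ∈ l := by
        by_contra hc
        rw [List.formPerm_apply_of_notMem (by simp [hxM, hc])] at hx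
        exact lt_irrefl _ hx
      obtain ⟨k, hk, rfl⟩ := List.getElem_of_mem hxl
      by_cases hk1 : k + 1 = l.length
      · rw [f2 k hk1] at hx
        exact absurd hx (h _ hxl).asymm
      · have hk2 : k + 1 < l.length := by omega
        rw [f1 k hk2] at hx
        refine ⟨k, ⟨by omega, ?_⟩, by simp [hk]⟩
        rw [stp_lt l k hk2]
        simpa using hx.le
    · rintro (rfl | ⟨k, ⟨hk, hs⟩, rfl⟩)
      · rw [f0]; exact h _ (List.getElem_mem _)
      · have hk2 : k + 1 < l.length := by omega
        have hk1 : k < l.length := by omega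
        rw [stp_lt l k hk2] at hs
        simp only [List.getD_eq_getElem?_getD, List.getElem?_eq_getElem hk1, Option.getD_some]
        rw [f1 k hk2]
        simp only [decide_eq_false_iff_not, not_lt] at hs
        refine lt_of_le_of_ne hs fun h' => ?_
        have := hnd.getElem_inj_iff.1 h'
        omega
  unfold cdes
  rw [key, card_insert_of_notMem, card_image_of_injOn]
  · rfl
  · intro a ha b hb hab
    simp only [coe_filter, mem_range, Set.mem_ofPred_eq] at ha hb
    have ha' : a < l.length := by omega
    have hb' : b < l.length := by omega
    simp only [List.getD_eq_getElem?_getD, List.getElem?_eq_getElem ha',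
      List.getElem?_eq_getElem hb', Option.getD_some] at hab
    exact hnd.getElem_inj_iff.1 hab
  · intro hc
    simp only [mem_image, mem_filter, mem_range] at hc
    obtain ⟨k, ⟨hk, -⟩, he⟩ := hc
    have hk1 : k < l.length := by omega
    simp only [List.getD_eq_getElem?_getD, List.getElem?_eq_getElem hk1, Option.getD_some] at he
    exact hM (he ▸ List.getElem_mem _)

lemma om_formPerm {N : ℕ} (M : Fin N) (l : List (Fin N)) (hl : (M :: l).Nodup)
    (h : ∀ x ∈ l, x < M) : om (M :: l).formPerm = Phic l.length (stp l) := by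
  by_cases h0 : l = []
  · subst h0; simp [om, Phic]
  have hlen : 0 < l.length := List.length_pos_iff.2 h0
  have hc := List.isCycle_formPerm hl (by simp; omega)
  have hs := List.support_formPerm_of_nodup (M :: l) hl (by simp [h0])
  have hcard : #(M :: l).formPerm.support = l.length + 1 := by
    rw [hs, List.toFinset_card_of_nodup hl]; simp
  have h1 := cdes_formPerm M l hl h h0
  have h2 := cdes_add_casc (M :: l).formPerm
  have h3 := as_add_ds l.length (stp l)
  have h4 : casc (M :: l).formPerm = as l.length (stp l) + 1 := by omega
  rw [om, hc.cycleFactorsFinset_eq_singleton, prod_singleton, phi, hcard, h1, h4, Phic,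
    if_neg hlen.ne']
  have : Odd (l.length + 1) ↔ Even l.length := by
    rw [← Nat.not_even_iff_odd, Nat.even_add_one, not_not]
  simp only [this]

lemma cycleOf_fp {N : ℕ} (M : Fin N) (l : List (Fin N)) (hl : (M :: l).Nodup) :
    (M :: l).formPerm.cycleOf M = (M :: l).formPerm := by
  by_cases h0 : l = []
  · subst h0; rw [List.formPerm_singleton, Equiv.Perm.cycleOf_one]
  have hlen : 0 < l.length := List.length_pos_iff.2 h0
  have hc := List.isCycle_formPerm hl (by simp; omega)
  have hs := List.support_formPerm_of_nodup (M :: l) hl (by simp [h0])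
  apply hc.cycleOf_eq
  rw [← Equiv.Perm.mem_support, hs]; simp

lemma fp_inj {N : ℕ} (M : Fin N) (l l' : List (Fin N)) (hl : (M :: l).Nodup) (hl' : (M :: l').Nodup)
    (h : (M :: l).formPerm = (M :: l').formPerm) : l = l' := by
  have e1 := List.formPerm_eq_one_iff _ hl
  have e2 := List.formPerm_eq_one_iff _ hl'
  rw [h, e2] at e1
  simp only [List.length_cons] at e1
  by_cases h0 : l.length = 0
  · have : l'.length = 0 := by omega
    rw [List.length_eq_zero_iff] at h0 this
    rw [h0, this]
  · have a1 := Equiv.Perm.toList_formPerm_nontrivial (M :: l) (by simp; omega) hl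
    have a2 := Equiv.Perm.toList_formPerm_nontrivial (M :: l') (by simp; omega) hl'
    rw [← h] at a2
    have := a1.symm.trans a2
    simpa using this

lemma Q_rec {N : ℕ} (S : Finset (Fin N)) (M : Fin N) (hM : ∀ x ∈ S, x < M) :
    Q (insert M S) = ∑ T ∈ S.powerset, E Phic T * Q (S \ T) := by
  have hMS : M ∉ S := fun h => lt_irrefl _ (hM _ h)
  unfold Q E
  simp_rw [sum_mul_sum, ← sum_product', sum_sigma']
  symm
  have basic : ∀ (T : Finset (Fin N)) (l : List (Fin N)) (τ : Equiv.Perm (Fin N)), T ⊆ S → l ∈ W T →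
      τ.support ⊆ S \ T → (M :: l).Nodup ∧ (∀ x ∈ l, x < M) ∧ (M :: l).formPerm.Disjoint τ ∧
        τ M = M ∧ (M :: l).formPerm.support ⊆ insert M T := by
    intro T l τ hT hl hτ
    rw [mem_W] at hl
    have h1 : ∀ x ∈ l, x < M := fun x hx => hM x (hT ((hl.2 x).1 hx))
    have h5 : (M :: l).formPerm.support ⊆ insert M T := by
      intro x hx
      have := List.support_formPerm_le (M :: l) hx
      simpa [hl.2] using this
    have h4 : M ∉ τ.support := fun h => hMS (mem_sdiff.1 (hτ h)).1
    refine ⟨List.nodup_cons.2 ⟨fun h => lt_irrefl _ (h1 _ h), hl.1⟩, h1, ?_, by simpa using h4, h5⟩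
    rw [Equiv.Perm.disjoint_iff_disjoint_support, disjoint_left]
    intro x hx hx'
    have a := h5 hx
    have b := mem_sdiff.1 (hτ hx')
    rw [mem_insert] at a
    rcases a with rfl | a
    · exact h4 hx'
    · exact b.2 a
  refine sum_bij (fun p _ => (M :: p.2.1).formPerm * p.2.2) ?_ ?_ ?_ ?_
  · rintro ⟨T, l, τ⟩ h
    simp only [mem_sigma, mem_powerset, mem_product, mem_filter, mem_univ, true_and] at h ⊢
    obtain ⟨b1, b2, b3, b4, b5⟩ := basic T l τ h.1 h.2.1 h.2.2
    rw [b3.support_mul]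
    refine union_subset (b5.trans (insert_subset_insert _ h.1)) ?_
    exact h.2.2.trans (sdiff_subset.trans (subset_insert _ _))
  · rintro ⟨T, l, τ⟩ h ⟨T', l', τ'⟩ h' heq
    simp only [mem_sigma, mem_powerset, mem_product, mem_filter, mem_univ, true_and] at h h' heq
    obtain ⟨b1, b2, b3, b4, b5⟩ := basic T l τ h.1 h.2.1 h.2.2
    obtain ⟨c1, c2, c3, c4, c5⟩ := basic T' l' τ' h'.1 h'.2.1 h'.2.2
    have e1 := Equiv.Perm.cycleOf_mul_of_apply_right_eq_self b3.commute M b4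
    have e2 := Equiv.Perm.cycleOf_mul_of_apply_right_eq_self c3.commute M c4
    rw [cycleOf_fp M l b1] at e1
    rw [cycleOf_fp M l' c1] at e2
    have e3 : (M :: l).formPerm = (M :: l').formPerm := by rw [← e1, ← e2, heq]
    have e4 := fp_inj M l l' b1 c1 e3
    subst e4
    have e5 : τ = τ' := mul_left_cancel heq
    subst e5
    have : T = T' := by
      ext x; rw [← (mem_W.1 h.2.1).2, ← (mem_W.1 h'.2.1).2]
    subst this
    rfl
  · intro σ hσ
    simp only [mem_filter, mem_univ, true_and] at hσ
    by_cases hs : M ∈ σ.support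
    · have hpos := Equiv.Perm.length_toList_pos_of_mem_support σ M hs
      have hz := Equiv.Perm.toList_getElem_zero σ M hs
      obtain ⟨l, hl⟩ : ∃ l, σ.toList M = M :: l := by
        cases hL : σ.toList M with
        | nil => simp [hL] at hpos
        | cons a l => simp [hL] at hz; exact ⟨l, by rw [hz]⟩
      have hnd := Equiv.Perm.nodup_toList σ M
      have hfp := Equiv.Perm.formPerm_toList σ M
      rw [hl] at hnd hfp
      have hmem := Equiv.Perm.cycleOf_mem_cycleFactorsFinset_iff.2 hs
      have hdis := Equiv.Perm.disjoint_mul_inv_of_mem_cycleFactorsFinset hmem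
      have hprod : σ.cycleOf M * (σ * (σ.cycleOf M)⁻¹) = σ := by
        rw [← hdis.commute.eq]; simp
      have hsupp : σ.support = (σ * (σ.cycleOf M)⁻¹).support ∪ (σ.cycleOf M).support := by
        rw [← hdis.support_mul]; simp
      have hd2 := Equiv.Perm.disjoint_iff_disjoint_support.1 hdis
      have hMl := (List.nodup_cons.1 hnd).1
      have hcs : (σ.cycleOf M).support = insert M l.toFinset := by
        rw [← hfp, List.support_formPerm_of_nodup _ hnd]
        · simp
        · intro x hx
          rw [← hl] at hx
          exact Equiv.Perm.toList_ne_singleton _ _ _ hx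
      refine ⟨⟨l.toFinset, l, σ * (σ.cycleOf M)⁻¹⟩, ?_, ?_⟩
      · simp only [mem_sigma, mem_powerset, mem_product, mem_filter, mem_univ, true_and]
        refine ⟨?_, mem_W.2 ⟨(List.nodup_cons.1 hnd).2, by simp⟩, ?_⟩
        · intro x hx
          have : x ∈ σ.support := by rw [hsupp, hcs]; simp at hx; simp [hx]
          have := hσ this
          rw [mem_insert] at this
          rcases this with rfl | h
          · simp at hx; exact absurd hx hMl
          · exact h
        · intro x hx
          have h1 : x ∈ σ.support := by rw [hsupp]; exact mem_union_left _ hx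
          have h2 := disjoint_left.1 hd2 hx
          rw [hcs, mem_insert, not_or] at h2
          have h3 := hσ h1
          rw [mem_insert] at h3
          rw [mem_sdiff]
          exact ⟨h3.resolve_left h2.1, h2.2⟩
      · simp only [hfp, hprod]
    · refine ⟨⟨∅, [], σ⟩, ?_, by simp⟩
      simp only [mem_sigma, mem_powerset, mem_product, mem_filter, mem_univ, true_and]
      refine ⟨by simp, mem_W.2 (by simp), ?_⟩
      intro x hx
      have := hσ hx
      rw [mem_insert] at this
      rcases this with rfl | h
      · exact absurd hx hs
      · simpa using h
  · rintro ⟨T, l, τ⟩ h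
    simp only [mem_sigma, mem_powerset, mem_product, mem_filter, mem_univ, true_and] at h ⊢
    obtain ⟨b1, b2, b3, b4, b5⟩ := basic T l τ h.1 h.2.1 h.2.2
    rw [om_mul b3, om_formPerm M l b1 b2]

lemma Q_eq {N : ℕ} (S : Finset (Fin N)) : Q S = sol (en Phic) #S := by
  induction hn : #S using Nat.strong_induction_on generalizing S with
  | _ n ih =>
    subst hn
    rcases S.eq_empty_or_nonempty with rfl | hne
    · simp [Q, sol_zero, om, filter_eq']
    let M := S.max' hne
    have hM : M ∈ S := S.max'_mem hne
    have hS : S = insert M (S.erase M) := (insert_erase hM).symm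
    have hlt : ∀ x ∈ S.erase M, x < M := fun x hx =>
      lt_of_le_of_ne (S.le_max' x (mem_of_mem_erase hx)) (ne_of_mem_erase hx)
    have hc : #S = #(S.erase M) + 1 := (card_erase_add_one hM).symm
    rw [hc, sol_succ]
    conv_lhs => rw [hS]
    rw [Q_rec _ M hlt]
    have : ∀ T ∈ (S.erase M).powerset, E Phic T * Q ((S.erase M) \ T) =
        (fun k => en Phic k * sol (en Phic) (#(S.erase M) - k)) #T := by
      intro T hT
      rw [mem_powerset] at hT
      have h1 := card_sdiff_of_subset hT
      rw [E_en, ih _ (by omega) _ rfl, h1]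
    rw [sum_congr rfl this]
    refine (sum_powerset_apply_card
      (fun k => en Phic k * sol (en Phic) (#(S.erase M) - k))).trans ?_
    simp [nsmul_eq_mul]

lemma om_eq {N : ℕ} (σ : Equiv.Perm (Fin N)) :
    om σ = if ∀ m ∈ σ.cycleType, Odd m then X ^ Mstat σ else 0 := by
  have : (∀ m ∈ σ.cycleType, Odd m) ↔ ∀ c ∈ σ.cycleFactorsFinset, Odd #c.support := by
    rw [Equiv.Perm.cycleType_def]; simp
  unfold om Mstat
  split_ifs with h
  · rw [this] at h
    rw [← prod_pow_eq_pow_sum]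
    exact prod_congr rfl fun c hc => by rw [phi, if_pos (h c hc)]
  · rw [this] at h
    push Not at h
    obtain ⟨c, hc, ho⟩ := h
    exact prod_eq_zero hc (by rw [phi, if_neg]; simpa using ho)

lemma odd_side (n d : ℕ) : (Nat.card {π : Equiv.Perm (Fin n) //
        (∀ m ∈ π.cycleType, Odd m) ∧ Mstat π = d} : ℚ) = (sol (en Phic) n).coeff d := by
  classical
  have h := Q_eq (univ : Finset (Fin n))
  rw [card_univ, Fintype.card_fin] at h
  rw [← h, Q, finsetSum_coeff, Nat.card_eq_fintype_card, Fintype.card_subtype, card_filter]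
  simp only [subset_univ, filter_true]
  push_cast
  refine sum_congr rfl fun σ _ => ?_
  rw [om_eq]
  by_cases h1 : ∀ m ∈ σ.cycleType, Odd m
  · rw [if_pos h1, coeff_X_pow]
    by_cases h2 : Mstat σ = d
    · simp [h2]; exact h1
    · rw [if_neg (fun h => h2 h.2), if_neg (Ne.symm h2)]
  · rw [if_neg h1, if_neg (fun h => h1 h.1)]; simp

lemma ballot_side (n d : ℕ) : (Nat.card {π : Equiv.Perm (Fin n) //
        IsBallot n π ∧ desNum n π = d} : ℚ) = (en PhiN n).coeff d := by
  classical
  rw [Nat.card_eq_fintype_card, Fintype.card_subtype, card_filter, en, E, finsetSum_coeff]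
  push_cast
  have hmem : ∀ π : Equiv.Perm (Fin n), List.ofFn π ∈ W (univ : Finset (Fin n)) := by
    intro π
    rw [mem_W]
    refine ⟨List.nodup_ofFn.2 π.injective, fun x => ?_⟩
    simp only [mem_univ, iff_true, List.mem_ofFn]
    exact π.surjective x
  refine sum_bij (fun π _ => List.ofFn π) (fun π _ => hmem π) ?_ ?_ ?_
  · intro π _ π' _ h
    exact Equiv.ext (congrFun (List.ofFn_injective h))
  · intro l hl
    have hlen := length_W hl
    rw [card_univ, Fintype.card_fin] at hlen
    rw [mem_W] at hl
    have hinj : Function.Injective (fun i : Fin n => l[(i : ℕ)]'(by omega)) := by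
      intro i j hij
      exact Fin.ext (hl.1.getElem_inj_iff.1 hij)
    refine ⟨Equiv.ofBijective _ (Finite.injective_iff_bijective.1 hinj), mem_univ _, ?_⟩
    apply List.ext_getElem
    · simp [hlen]
    · intro i h1 h2
      simp
  · intro π _
    have hlen : (List.ofFn π).length = n := by simp
    rw [hlen]
    have hs : ∀ k, k + 1 < n → (stp (List.ofFn π) k = true ↔ permWord n π k < permWord n π (k + 1)) := by
      intro k hk
      have hk' : k < n := by omega
      rw [stp_lt _ _ (by simpa using hk)]
      simp [permWord, hk, hk']
    have hs' : ∀ k, k + 1 < n → (stp (List.ofFn π) k = false ↔ permWord n π (k + 1) < permWord n π k) := by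
      intro k hk
      have hk' : k < n := by omega
      rw [← Bool.not_eq_true, hs k hk, not_lt]
      have : permWord n π (k + 1) ≠ permWord n π k := by
        simp only [permWord, hk, hk', dif_pos]
        intro h
        have h1 : (⟨k + 1, hk⟩ : Fin n) = ⟨k, hk'⟩ := π.injective (Fin.ext (by omega))
        simp at h1
      omega
    have hA : ∀ i ≤ n, as i (stp (List.ofFn π)) =
        ((Finset.range (i - 1)).filter (fun k => permWord n π k < permWord n π (k + 1))).card := by
      intro i hi
      unfold as
      congr 1
      exact filter_congr fun k hk => hs k (by simp at hk; omega)
    have hD : ∀ i ≤ n, ds i (stp (List.ofFn π)) =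
        ((Finset.range (i - 1)).filter (fun k => permWord n π (k + 1) < permWord n π k)).card := by
      intro i hi
      unfold ds
      congr 1
      exact filter_congr fun k hk => hs' k (by simp at hk; omega)
    have hB : IsBallot n π ↔ Bal n (stp (List.ofFn π)) := by
      unfold IsBallot Bal
      constructor
      · intro h j hj
        have h1 := h (j + 1) (by omega)
        rw [← hA _ (by omega), ← hD _ (by omega)] at h1
        have h2 := hgt_eq (j + 1) (stp (List.ofFn π))
        rw [Nat.add_sub_cancel] at h2
        omega
      · intro h i hi
        rcases Nat.eq_zero_or_pos i with rfl | hpos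
        · simp
        rw [← hA _ hi, ← hD _ hi]
        have h2 := hgt_eq i (stp (List.ofFn π))
        have := h (i - 1) (by omega)
        omega
    have hdn : desNum n π = ds n (stp (List.ofFn π)) := (hD n le_rfl).symm
    rw [PhiN, hdn, wt_eq]
    by_cases h1 : IsBallot n π
    · rw [if_pos (hB.1 h1), coeff_X_pow]
      by_cases h2 : ds n (stp (List.ofFn π)) = d
      · rw [if_pos ⟨h1, h2⟩, if_pos h2.symm]
      · rw [if_neg (fun h => h2 h.2), if_neg (Ne.symm h2)]
    · rw [if_neg (fun h => h1 (hB.2 h)), if_neg (fun h => h1 h.1)]; simp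

end BO
end

/-- For `0 ≤ d ≤ ⌊(n-1)/2⌋`, the number of ballot permutations of `[n]` with `d` descents
equals the number of odd order permutations `π` of `[n]` with `M(π) = d`. -/
theorem ballot_eq_oddOrder (n d : ℕ) (hn : 1 ≤ n) (hd : d ≤ (n - 1) / 2) :
    Nat.card {π : Equiv.Perm (Fin n) // IsBallot n π ∧ desNum n π = d} =
      Nat.card {π : Equiv.Perm (Fin n) //
        (∀ m ∈ π.cycleType, Odd m) ∧ Mstat π = d} := by
  have h := (BO.ballot_side n d).trans
    ((congrArg (fun p => p.coeff d) (BO.seq_eq n).1).trans (BO.odd_side n d).symm)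
  exact_mod_cast h
end
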